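/- arXiv:1609.06355 — 2 statements merged into one kernel-verified Lean document; each statement's English description precedes it below -/
import Mathlib

section
/- For every α > 0, every integer q ≥ 2 and every β ∈ (0,1), there exist C > 0 and N0 such that for every N ≥ N0 the following holds. Set m = ⌈C·N^{1−1/⌈q/2⌉}·(log N)^C⌉ if q ≥ 3, and m = ⌈C·(log N)²⌉ if q = 2. If D is a uniformly random subset of ℤ/Nℤ of size m, then with probability at least 1 − β, every subset A ⊆ ℤ/Nℤ with |A| ≥ αN contains a q-term arithmetic progression a, a+d, a+2d, …, a+(q−1)d with nonzero common difference d ∈ D. -/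
/-!
The density Hales–Jewett theorem, averaged over random placements of the cube, shows that a dense
subset `A` of a finite abelian group contains a positive proportion of all `q`-term progressions,
with no assumption on the order of the group. Let `q = 2k`. The progressions of a fixed difference
`d` are encoded in a truncated Kikuchi matrix indexed by `k`-tuples of words of length
`t ≈ n ^ (1 - 1 / k)`, where `n` is the order of the group: its quadratic form at the indicator of
the tuples of words in `A` averages, over `d`, to a positive constant times the squared norm, and
vanishes at `d` if `A` contains no progression of difference `d`. Independent samples for which this
form vanishes throughout, for some vector, are rare: after symmetrization the sum is a Rademacher
sum of matrices of bounded row sums, whose trace moments are dominated by those of a scalar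
Rademacher sum, and the log-dimension `k * t * log n` is the required number of samples. Since
failing to be intersective is inherited by subsets, the bound passes from independent samples to
uniformly random sets of the same size.
-/

open Finset Matrix
open Combinatorics (Line)
open scoped BigOperators

namespace RandomDifferences

section Density

variable {Ω C : Type*}

lemma indicator_one_nonneg (A : Set Ω) (x : Ω) : 0 ≤ A.indicator (1 : Ω → ℝ) x :=
  Set.indicator_nonneg (fun _ _ => zero_le_one) x

lemma indicator_one_le_one (A : Set Ω) (x : Ω) : A.indicator (1 : Ω → ℝ) x ≤ 1 :=
  Set.indicator_le_self' (fun _ _ => zero_le_one) x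

variable [Fintype Ω]

/-- The proportion of the points of a finite type lying in `A`, as a real number. -/
noncomputable def density (A : Set Ω) : ℝ := 𝔼 x, A.indicator 1 x

lemma density_nonneg (A : Set Ω) : 0 ≤ density A :=
  expect_nonneg fun x _ => indicator_one_nonneg A x

lemma density_le_one (A : Set Ω) : density A ≤ 1 := by
  rcases isEmpty_or_nonempty Ω with _ | _
  · simp [density]
  · exact expect_le univ_nonempty fun x _ => indicator_one_le_one A x

lemma density_mono {A B : Set Ω} (h : A ⊆ B) : density A ≤ density B :=
  expect_le_expect fun _ _ => Set.indicator_le_indicator_of_subset h (fun _ => zero_le_one) _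

lemma nonempty_of_density_pos {A : Set Ω} (h : 0 < density A) : A.Nonempty := by
  by_contra hA
  simp [density, Set.not_nonempty_iff_eq_empty.1 hA] at h

lemma inv_card_le_density {A : Set Ω} (h : A.Nonempty) :
    (Fintype.card Ω : ℝ)⁻¹ ≤ density A := by
  classical
  obtain ⟨x, hx⟩ := h
  have : A.indicator (1 : Ω → ℝ) x ≤ ∑ y, A.indicator 1 y :=
    single_le_sum (fun y _ => indicator_one_nonneg A y) (mem_univ x)
  rw [density, Fintype.expect_eq_sum_div_card, inv_eq_one_div]
  gcongr
  simpa [hx] using this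

lemma expect_le_density_add {f : Ω → ℝ} (hf : ∀ x, f x ≤ 1) {c : ℝ} (hc : 0 ≤ c) :
    𝔼 x, f x ≤ density {x | c ≤ f x} + c := by
  rcases isEmpty_or_nonempty Ω with _ | _
  · simp [density, hc]
  calc 𝔼 x, f x ≤ 𝔼 x, ({x | c ≤ f x}.indicator 1 x + c) := by
        refine expect_le_expect fun x _ => ?_
        by_cases hx : c ≤ f x
        · simpa [hx] using (hf x).trans (le_add_of_nonneg_right hc)
        · simpa [hx] using (not_le.1 hx).le
    _ = _ := by rw [expect_add_distrib, Fintype.expect_const, density]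

lemma exists_div_card_le_density [Fintype C] {δ : ℝ} (hδ : 0 < δ) {S : Set Ω}
    (hS : δ ≤ density S) {T : C → Set Ω} (hT : S ⊆ ⋃ c, T c) :
    ∃ c, δ / Fintype.card C ≤ density (T c) := by
  have hsum : density S ≤ ∑ c, density (T c) := by
    simp only [density, ← expect_sum_comm]
    refine expect_le_expect fun x _ => ?_
    by_cases hx : x ∈ S
    · obtain ⟨c, hc⟩ := Set.mem_iUnion.1 (hT hx)
      calc S.indicator (1 : Ω → ℝ) x = (T c).indicator 1 x := by simp [hx, hc]
        _ ≤ _ := single_le_sum (f := fun c => (T c).indicator (1 : Ω → ℝ) x)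
          (fun c _ => indicator_one_nonneg (T c) x) (mem_univ c)
    · rw [Set.indicator_of_notMem hx]
      exact sum_nonneg fun c _ => indicator_one_nonneg (T c) x
  have : Nonempty C := by
    obtain ⟨x, hx⟩ := nonempty_of_density_pos (hδ.trans_le hS)
    exact (Set.mem_iUnion.1 (hT hx)).nonempty
  obtain ⟨c, -, hc⟩ := exists_le_of_sum_le (univ_nonempty (α := C))
    (f := fun _ => δ / Fintype.card C) (g := fun c => density (T c)) <| by
      rw [sum_const, card_univ, nsmul_eq_mul, mul_div_cancel₀ δ (by simp)]
      exact hS.trans hsum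
  exact ⟨c, hc⟩

end Density

section Cube

variable {κ : Type*} [Fintype κ]

lemma expect_append {a b : ℕ} (f : (Fin (a + b) → κ) → ℝ) :
    𝔼 x, f x = 𝔼 x, 𝔼 y, f (Fin.append x y) := by
  rw [← expect_product', univ_product_univ]
  exact (Fintype.expect_equiv (Fin.appendEquiv a b) _ _ fun _ => rfl).symm

lemma density_eq_expect_density_append {a b : ℕ} (A : Set (Fin (a + b) → κ)) :
    density A = 𝔼 y, density ((Fin.append · y) ⁻¹' A) := by
  rw [density, expect_append, expect_comm]
  rfl

lemma expect_comp_val [Nonempty κ] {ι : Type*} [Fintype ι] [DecidableEq ι] (p : ι → Prop)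
    [DecidablePred p] (f : ({i // p i} → κ) → ℝ) :
    𝔼 x : ι → κ, f (fun i => x i) = 𝔼 x, f x := by
  calc 𝔼 x : ι → κ, f (fun i => x i)
      = 𝔼 x : ({i // p i} → κ) × ({i // ¬p i} → κ), f x.1 :=
        Fintype.expect_equiv (Equiv.piEquivPiSubtypeProd p fun _ => κ) _ _ fun _ => rfl
    _ = 𝔼 x, f x := by
        rw [← univ_product_univ, expect_product]
        simp only [Fintype.expect_const]

end Cube

section Subspace

variable {κ η ζ ι : Type*}

@[simp] lemma default_subspace_apply (x : ι → κ) :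
    (default : Combinatorics.Subspace ι κ ι) x = x := rfl

/-- The composition of two combinatorial subspaces, as parametrizations of cubes. -/
def subspaceComp (V : Combinatorics.Subspace η κ ι) (W : Combinatorics.Subspace ζ κ η) :
    Combinatorics.Subspace ζ κ ι where
  idxFun i := (V.idxFun i).elim Sum.inl W.idxFun
  proper e := by
    obtain ⟨j, hj⟩ := W.proper e
    obtain ⟨i, hi⟩ := V.proper j
    exact ⟨i, by simp [hi, hj]⟩

@[simp] lemma subspaceComp_apply (V : Combinatorics.Subspace η κ ι)
    (W : Combinatorics.Subspace ζ κ η) (x : ζ → κ) : subspaceComp V W x = V (W x) := by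
  ext i
  cases h : V.idxFun i <;> simp [Combinatorics.Subspace.coe_apply, subspaceComp, h]

/-- The image of a combinatorial line under a combinatorial subspace. -/
def subspaceLine (V : Combinatorics.Subspace η κ ι) (l : Line κ η) : Line κ ι where
  idxFun i := (V.idxFun i).elim some l.idxFun
  proper := by
    obtain ⟨j, hj⟩ := l.proper
    obtain ⟨i, hi⟩ := V.proper j
    exact ⟨i, by simp [hi, hj]⟩

@[simp] lemma subspaceLine_apply (V : Combinatorics.Subspace η κ ι) (l : Line κ η) (a : κ) :
    subspaceLine V l a = V (l a) := by
  ext i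
  cases h : V.idxFun i <;> simp [Combinatorics.Subspace.coe_apply, subspaceLine, h]

/-- A subspace on the first `a` coordinates, with the last `b` coordinates held at `y`. -/
def subspaceAppendRight {a b : ℕ} (V : Combinatorics.Subspace η κ (Fin a)) (y : Fin b → κ) :
    Combinatorics.Subspace η κ (Fin (a + b)) where
  idxFun := Fin.append V.idxFun (Sum.inl ∘ y)
  proper e := (V.proper e).elim fun i hi => ⟨Fin.castAdd b i, by simpa using hi⟩

@[simp] lemma subspaceAppendRight_apply {a b : ℕ} (V : Combinatorics.Subspace η κ (Fin a))
    (y : Fin b → κ) (x : η → κ) : subspaceAppendRight V y x = Fin.append (V x) y := by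
  ext i
  refine Fin.addCases (fun j => ?_) (fun j => ?_) i <;>
    simp [Combinatorics.Subspace.coe_apply, subspaceAppendRight]

/-- A subspace on the last `b` coordinates, with the first `a` coordinates held at `x`. -/
def subspaceAppendLeft {a b : ℕ} (x : Fin a → κ) (V : Combinatorics.Subspace η κ (Fin b)) :
    Combinatorics.Subspace η κ (Fin (a + b)) where
  idxFun := Fin.append (Sum.inl ∘ x) V.idxFun
  proper e := (V.proper e).elim fun i hi => ⟨Fin.natAdd a i, by simpa using hi⟩

@[simp] lemma subspaceAppendLeft_apply {a b : ℕ} (x : Fin a → κ)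
    (V : Combinatorics.Subspace η κ (Fin b)) (y : η → κ) :
    subspaceAppendLeft x V y = Fin.append x (V y) := by
  ext i
  refine Fin.addCases (fun j => ?_) (fun j => ?_) i <;>
    simp [Combinatorics.Subspace.coe_apply, subspaceAppendLeft]

/-- The product of a line on the first `a` coordinates, whose parameter becomes direction `0`,
and an `m`-dimensional subspace on the last `b` coordinates. -/
def lineAppendSubspace {a b m : ℕ} (l : Line κ (Fin a))
    (V : Combinatorics.Subspace (Fin m) κ (Fin b)) :
    Combinatorics.Subspace (Fin (m + 1)) κ (Fin (a + b)) where
  idxFun := Fin.append (fun i => (l.idxFun i).elim (Sum.inr 0) Sum.inl)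
    (fun i => (V.idxFun i).map id Fin.succ)
  proper e := by
    cases e using Fin.cases with
    | zero => exact l.proper.elim fun i hi => ⟨Fin.castAdd b i, by simp [hi]⟩
    | succ e => exact (V.proper e).elim fun i hi => ⟨Fin.natAdd a i, by simp [hi]⟩

@[simp] lemma lineAppendSubspace_apply {a b m : ℕ} (l : Line κ (Fin a))
    (V : Combinatorics.Subspace (Fin m) κ (Fin b)) (x : Fin (m + 1) → κ) :
    lineAppendSubspace l V x = Fin.append (l (x 0)) (V (Fin.tail x)) := by
  ext i
  refine Fin.addCases (fun j => ?_) (fun j => ?_) i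
  · cases h : l.idxFun j <;> simp [Combinatorics.Subspace.coe_apply, lineAppendSubspace, h]
  · cases h : V.idxFun j <;>
      simp [Combinatorics.Subspace.coe_apply, lineAppendSubspace, h, Fin.tail]

lemma subspace_injective (V : Combinatorics.Subspace η κ ι) : Function.Injective V := by
  intro x y hxy
  ext e
  obtain ⟨i, hi⟩ := V.proper e
  simpa [Combinatorics.Subspace.apply_inr hi] using congrFun hxy i

lemma exists_subspace_expect_le [Fintype κ] [Nonempty κ] {m n : ℕ} (h : m ≤ n)
    (f : (Fin n → κ) → ℝ) :
    ∃ V : Combinatorics.Subspace (Fin m) κ (Fin n), 𝔼 x, f x ≤ 𝔼 w, f (V w) := by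
  obtain ⟨c, rfl⟩ := Nat.exists_eq_add_of_le h
  rw [expect_append, expect_comm]
  obtain ⟨y, -, hy⟩ := exists_le_of_le_expect univ_nonempty
    (le_refl (𝔼 y : Fin c → κ, 𝔼 x, f (Fin.append x y)))
  exact ⟨subspaceAppendRight default y, by simpa using hy⟩

lemma exists_subspace_expect_comp_le [Fintype κ] [Nonempty κ] [Fintype η]
    [DecidableEq η] {m : ℕ}
    (h : m ≤ Fintype.card η) (V : Combinatorics.Subspace η κ ι) (f : (ι → κ) → ℝ) :
    ∃ W : Combinatorics.Subspace (Fin m) κ ι, 𝔼 x, f (V x) ≤ 𝔼 w, f (W w) := by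
  let e := Fintype.equivFin η
  obtain ⟨W, hW⟩ := exists_subspace_expect_le h fun x => f (V (x ∘ e))
  refine ⟨subspaceComp (V.reindex e (Equiv.refl κ) (Equiv.refl ι)) W, ?_⟩
  calc 𝔼 x, f (V x) = 𝔼 x, f (V (x ∘ e)) :=
        (Fintype.expect_equiv (Equiv.arrowCongr e.symm (Equiv.refl κ)) _ _ fun _ => rfl).symm
    _ ≤ _ := hW.trans_eq <| expect_congr rfl fun w _ => congrArg f <| funext fun i => by
        simp [Function.comp_def]

end Subspace

section LineFree

variable {κ η ι : Type*}

/-- `A` contains no combinatorial line. -/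
def LineFree (A : Set (ι → κ)) : Prop := ∀ l : Line κ ι, ∃ a, l a ∉ A

lemma LineFree.preimage {A : Set (ι → κ)} (hA : LineFree A) (V : Combinatorics.Subspace η κ ι) :
    LineFree (V ⁻¹' A) := fun l => by
  obtain ⟨a, ha⟩ := hA (subspaceLine V l)
  exact ⟨a, by simpa using ha⟩

lemma LineFree.exists_density_le [Fintype κ] [Nonempty κ] {m n : ℕ} (h : m ≤ n)
    {A : Set (Fin n → κ)} (hA : LineFree A) :
    ∃ B : Set (Fin m → κ), LineFree B ∧ density A ≤ density B := by
  obtain ⟨V, hV⟩ := exists_subspace_expect_le h (A.indicator 1)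
  exact ⟨V ⁻¹' A, hA.preimage V, hV⟩

noncomputable instance [Finite κ] [Finite ι] : Fintype (Line κ ι) :=
  have := Fintype.ofFinite (ι → Option κ)
  Fintype.ofInjective Line.idxFun fun l m h => by cases l; cases m; congr

/-- The density Hales–Jewett theorem for the alphabet `κ`: line-free sets in high-dimensional
cubes are sparse. -/
def DensityHalesJewett (κ : Type*) [Fintype κ] : Prop :=
  ∀ δ > 0, ∃ n, ∀ A : Set (Fin n → κ), LineFree A → density A < δ

end LineFree

namespace DensityHalesJewett

variable {κ : Type*} [Fintype κ]

lemma exists_common_line (h : DensityHalesJewett κ) {δ : ℝ} (hδ : 0 < δ) :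
    ∃ n, ∃ c > 0, ∀ (Ω : Type*) [Fintype Ω] (B : Ω → Set (Fin n → κ)), δ ≤ 𝔼 p, density (B p) →
      ∃ l : Line κ (Fin n), c ≤ density {p | ∀ a, l a ∈ B p} := by
  obtain ⟨n, hn⟩ := h (δ / 2) (half_pos hδ)
  have mem_line {A : Set (Fin n → κ)} (hA : δ / 2 ≤ density A) :
      ∃ l : Line κ (Fin n), ∀ a, l a ∈ A := by
    by_contra! hfree
    exact (hn A hfree).not_ge hA
  have many {Ω : Type _} [Fintype Ω] {B : Ω → Set (Fin n → κ)} (hB : δ ≤ 𝔼 p, density (B p)) :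
      δ / 2 ≤ density {p | δ / 2 ≤ density (B p)} := by
    linarith [expect_le_density_add (fun p => density_le_one (B p)) (half_pos hδ).le]
  rcases isEmpty_or_nonempty (Line κ (Fin n)) with _ | _
  · refine ⟨n, 1, one_pos, fun Ω _ B hB => ?_⟩
    obtain ⟨p, hp⟩ := nonempty_of_density_pos ((half_pos hδ).trans_le (many hB))
    exact isEmptyElim (mem_line hp).choose
  · refine ⟨n, δ / 2 / Fintype.card (Line κ (Fin n)), by positivity, fun Ω _ B hB => ?_⟩
    exact exists_div_card_le_density (half_pos hδ) (many hB) fun p hp =>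
      Set.mem_iUnion.2 (mem_line hp)

theorem exists_subspace (h : DensityHalesJewett κ) (m : ℕ) {δ : ℝ} (hδ : 0 < δ) :
    ∃ n, ∀ N ≥ n, ∀ A : Set (Fin N → κ), δ ≤ density A →
      ∃ V : Combinatorics.Subspace (Fin m) κ (Fin N), ∀ x, V x ∈ A := by
  induction m generalizing δ with
  | zero =>
    refine ⟨0, fun N _ A hA => ?_⟩
    obtain ⟨y, hy⟩ := nonempty_of_density_pos (hδ.trans_le hA)
    exact ⟨⟨Sum.inl ∘ y, fun e => e.elim0⟩, fun _ => hy⟩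
  | succ m ih =>
    obtain ⟨n₁, c, hc, hline⟩ := h.exists_common_line hδ
    obtain ⟨n₂, hsub⟩ := ih hc
    refine ⟨n₁ + n₂, fun N hN A hA => ?_⟩
    obtain ⟨k, rfl⟩ := Nat.exists_eq_add_of_le ((Nat.le_add_right n₁ n₂).trans hN)
    rw [density_eq_expect_density_append] at hA
    obtain ⟨l, hl⟩ := hline _ _ hA
    obtain ⟨V, hV⟩ := hsub k (by omega) _ hl
    exact ⟨lineAppendSubspace l V, fun x => by
      simpa using hV (Fin.tail x) (x 0)⟩

end DensityHalesJewett

section RandomRestriction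

variable {E B ι : Type*} [Fintype E] [Fintype B] [Nonempty B] [Fintype ι]

open Classical in
lemma expect_restriction [DecidableEq ι] {ρ : E → B} {τ : B → E} (h : Function.LeftInverse ρ τ)
    (F : (ι → B) → ℝ) :
    𝔼 s : ι → E, 𝔼 b : ι → B, F (fun j => if τ (ρ (s j)) = s j then b j else ρ (s j)) =
      𝔼 s : ι → E, F (ρ ∘ s) := by
  let swap : E × B → E × B := fun x => if τ (ρ x.1) = x.1 then (τ x.2, ρ x.1) else x
  have swap_involutive : Function.Involutive swap := fun x => by
    by_cases hx : τ (ρ x.1) = x.1 <;> simp [swap, hx, h _]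
  let e : (ι → E) × (ι → B) ≃ (ι → E) × (ι → B) :=
    (Equiv.arrowProdEquivProdArrow ι _ _).symm.trans
      ((Equiv.piCongrRight fun _ => swap_involutive.toPerm).trans
        (Equiv.arrowProdEquivProdArrow ι _ _))
  calc _ = 𝔼 x : (ι → E) × (ι → B), F (ρ ∘ x.1) := by
        rw [← expect_product', univ_product_univ]
        refine Fintype.expect_equiv e _ _ fun x => congrArg F (funext fun j => ?_)
        by_cases hj : τ (ρ (x.1 j)) = x.1 j <;>
          simp [e, swap, hj, h _, Equiv.arrowProdEquivProdArrow]
    _ = 𝔼 s : ι → E, F (ρ ∘ s) := by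
        rw [← univ_product_univ, expect_product]
        simp only [Fintype.expect_const]

open Classical in
lemma exists_density_few_le [Nonempty E] (m : ℕ) {ε : ℝ} (hε : 0 < ε) :
    ∃ n, ∀ N ≥ n, ∀ P : E → Prop, (∃ x, P x) →
      density {s : Fin N → E | #{j | P (s j)} < m} ≤ ε := by
  set r : ℝ := 1 - 1 / 2 / Fintype.card E with hr
  have hcard : (1 : ℝ) ≤ Fintype.card E := by exact_mod_cast Fintype.card_pos
  have hr0 : 0 ≤ r := by rw [hr, sub_nonneg, div_le_one (by positivity)]; linarith
  have hr1 : r < 1 := by rw [hr, sub_lt_self_iff]; positivity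
  obtain ⟨n, hn⟩ := exists_pow_lt_of_lt_one (show 0 < ε / 2 ^ m by positivity) hr1
  refine ⟨n, fun N hN P ⟨x₀, hx₀⟩ => ?_⟩
  -- The weight `2⁻¹ ^ #{j | P (s j)}` exceeds `2⁻¹ ^ m` on the event and has mean at most `r ^ N`.
  let w : E → ℝ := fun x => if P x then 2⁻¹ else 1
  have hw : 𝔼 x, w x ≤ r := by
    have : ∑ x, w x ≤ ∑ x : E, (1 - if x = x₀ then 2⁻¹ else 0) := by
      refine sum_le_sum fun x _ => ?_
      by_cases hx : x = x₀
      · subst hx; norm_num [w, hx₀]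
      · by_cases hP : P x <;> norm_num [w, hx, hP]
    rw [Fintype.expect_eq_sum_div_card, hr, div_le_iff₀ (by positivity)]
    refine this.trans_eq ?_
    rw [sum_sub_distrib, sum_ite_eq' univ x₀, sub_mul, div_mul_cancel₀ _ (by positivity)]
    simp
  have hpoint (s : Fin N → E) :
      {s : Fin N → E | #{j | P (s j)} < m}.indicator 1 s ≤ 2 ^ m * ∏ j, w (s j) := by
    have hprod : ∏ j, w (s j) = 2⁻¹ ^ #{j | P (s j)} := by
      simp only [w, prod_ite, prod_const, one_pow, mul_one]
    by_cases hs : #{j | P (s j)} < m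
    · rw [Set.indicator_of_mem (by exact hs), hprod, Pi.one_apply, inv_pow, ← div_eq_mul_inv,
        one_le_div (by positivity)]
      exact pow_le_pow_right₀ one_le_two hs.le
    · rw [Set.indicator_of_notMem (by exact hs), hprod]
      positivity
  calc density {s : Fin N → E | #{j | P (s j)} < m} ≤ 𝔼 s : Fin N → E, 2 ^ m * ∏ j, w (s j) :=
        expect_le_expect fun s _ => hpoint s
    _ = 2 ^ m * (𝔼 x, w x) ^ N := by rw [← mul_expect, expect_pow, Fintype.piFinset_univ]
    _ ≤ 2 ^ m * r ^ n := by
        gcongr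
        exact (pow_le_pow_left₀ (expect_nonneg fun x _ => by positivity) hw N).trans
          (pow_le_pow_of_le_one hr0 hr1.le hN)
    _ ≤ ε := by rw [← le_div_iff₀' (by positivity)]; exact hn.le

lemma exists_subspace_expect_comp_sub_le [Nonempty E] (m : ℕ) {K ε : ℝ} (hε : 0 < ε) :
    ∃ n, ∀ N ≥ n, ∀ ρ : E → B, Function.Surjective ρ → ∀ F : (Fin N → B) → ℝ, (∀ x, |F x| ≤ K) →
      ∃ V : Combinatorics.Subspace (Fin m) B (Fin N), 𝔼 s, F (ρ ∘ s) - ε ≤ 𝔼 w, F (V w) := by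
  classical
  obtain ⟨n, hn⟩ := exists_density_few_le (E := E) m (show 0 < ε / (2 * |K| + 1) by positivity)
  refine ⟨max m n, fun N hN ρ hρ F hF => ?_⟩
  obtain ⟨τ, hτ⟩ := hρ.hasRightInverse
  let few : Set (Fin N → E) := {s | #{j | τ (ρ (s j)) = s j} < m}
  have hfew : density few ≤ ε / (2 * |K| + 1) :=
    hn N ((le_max_right ..).trans hN) (fun x => τ (ρ x) = x)
      ⟨τ (Classical.arbitrary B), by rw [hτ]⟩
  have hK (x : Fin N → B) : |F x| ≤ |K| := (hF x).trans (le_abs_self K)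
  let G (s : Fin N → E) : ℝ :=
    𝔼 b : Fin N → B, F (fun j => if τ (ρ (s j)) = s j then b j else ρ (s j))
  have hG (s : Fin N → E) : |G s| ≤ |K| :=
    (abs_expect_le _ _).trans (expect_le univ_nonempty fun b _ => hK _)
  have hmean : 𝔼 s, F (ρ ∘ s) - ε ≤ 𝔼 s, (G s - 2 * |K| * few.indicator 1 s) := by
    have hsmall : 2 * |K| * density few ≤ ε :=
      calc 2 * |K| * density few ≤ (2 * |K| + 1) * (ε / (2 * |K| + 1)) := by
            exact mul_le_mul (by linarith) hfew (density_nonneg _) (by positivity)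
        _ = ε := mul_div_cancel₀ _ (by positivity)
    rw [expect_sub_distrib, expect_restriction hτ F, ← mul_expect]
    exact sub_le_sub_left hsmall _
  obtain ⟨s, -, hs⟩ := exists_le_of_le_expect univ_nonempty hmean
  by_cases hsfew : s ∈ few
  · obtain ⟨V, -⟩ := exists_subspace_expect_le ((le_max_left ..).trans hN) F
    have hV : |𝔼 w, F (V w)| ≤ |K| :=
      (abs_expect_le _ _).trans (expect_le univ_nonempty fun b _ => hK _)
    rw [Set.indicator_of_mem hsfew, Pi.one_apply, mul_one] at hs
    exact ⟨V, by linarith [abs_le.1 hV, abs_le.1 (hG s)]⟩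
  · let V : Combinatorics.Subspace {j // τ (ρ (s j)) = s j} B (Fin N) :=
      { idxFun := fun j => if h : τ (ρ (s j)) = s j then Sum.inr ⟨j, h⟩ else Sum.inl (ρ (s j))
        proper := fun e => ⟨e, dif_pos e.2⟩ }
    have hGV : G s = 𝔼 w, F (V w) := by
      rw [← expect_comp_val (fun j => τ (ρ (s j)) = s j) fun w => F (V w)]
      refine expect_congr rfl fun b _ => congrArg F (funext fun j => ?_)
      by_cases hj : τ (ρ (s j)) = s j <;> simp [V, Combinatorics.Subspace.coe_apply, hj]
    obtain ⟨W, hW⟩ := exists_subspace_expect_comp_le (m := m)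
      (by simpa [few, Fintype.card_subtype] using hsfew) V F
    rw [Set.indicator_of_notMem hsfew, mul_zero, sub_zero, hGV] at hs
    exact ⟨W, hs.trans hW⟩

end RandomRestriction

section Insensitive

variable {κ η ι : Type*}

/-- The word over `κ` obtained from a word over `Option κ` by replacing the letter `none` by `a`. -/
def fillNone (a : κ) (z : ι → Option κ) : ι → κ := fun j => (z j).getD a

/-- `S` is `a`-insensitive: membership in `S` is unaffected by exchanging the letters `none` and
`some a`. -/
def Insensitive (a : κ) (S : Set (ι → Option κ)) : Prop :=
  ∀ ⦃z z'⦄, fillNone a z = fillNone a z' → z ∈ S → z' ∈ S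

lemma Insensitive.preimage {a : κ} {S : Set (ι → Option κ)} (hS : Insensitive a S)
    (V : Combinatorics.Subspace η (Option κ) ι) : Insensitive a (V ⁻¹' S) :=
  fun z z' h => hS <| funext fun i => by
    cases hi : V.idxFun i with
    | inl => simp [Combinatorics.Subspace.coe_apply, fillNone, hi]
    | inr j => simpa [Combinatorics.Subspace.coe_apply, fillNone, hi] using congrFun h j

lemma Insensitive.compl {a : κ} {S : Set (ι → Option κ)} (hS : Insensitive a S) :
    Insensitive a Sᶜ :=
  fun _ _ h hz hz' => hz (hS h.symm hz')

lemma fillNone_append {a b : ℕ} (i : κ) (x : Fin a → Option κ) (y : Fin b → Option κ) :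
    fillNone i (Fin.append x y) = Fin.append (fillNone i x) (fillNone i y) := by
  ext j
  refine Fin.addCases (fun j => ?_) (fun j => ?_) j <;> simp [fillNone]

/-- The extension of a subspace to an alphabet with one more letter `none`. -/
def subspaceOption (V : Combinatorics.Subspace η κ ι) :
    Combinatorics.Subspace η (Option κ) ι where
  idxFun i := (V.idxFun i).map some id
  proper e := (V.proper e).imp fun i hi => by simp [hi]

lemma fillNone_subspaceOption (V : Combinatorics.Subspace η κ ι) (a : κ) (w : η → Option κ) :
    fillNone a (subspaceOption V w) = V (fillNone a w) := by
  ext i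
  cases h : V.idxFun i <;>
    simp [Combinatorics.Subspace.coe_apply, subspaceOption, fillNone, h]

lemma DensityHalesJewett.exists_subspace_of_insensitive [Fintype κ] (h : DensityHalesJewett κ)
    (m : ℕ) {β : ℝ} (hβ : 0 < β) :
    ∃ n, ∀ N ≥ n, ∀ (a : κ) (S : Set (Fin N → Option κ)), Insensitive a S → β ≤ density S →
      ∃ V : Combinatorics.Subspace (Fin m) (Option κ) (Fin N), ∀ w, V w ∈ S := by
  rcases isEmpty_or_nonempty κ with _ | _
  · exact ⟨0, fun _ _ a => isEmptyElim a⟩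
  obtain ⟨n₀, hn₀⟩ := h.exists_subspace m (half_pos hβ)
  obtain ⟨n, hn⟩ := exists_subspace_expect_comp_sub_le (E := Option κ) (B := κ) n₀ (K := 1)
    (half_pos hβ)
  refine ⟨n, fun N hN a S hS hβS => ?_⟩
  let Q : Set (Fin N → κ) := {x | some ∘ x ∈ S}
  have hQ (z : Fin N → Option κ) : fillNone a z ∈ Q ↔ z ∈ S :=
    have hfill : fillNone a (some ∘ fillNone a z) = fillNone a z := rfl
    ⟨fun hz => hS hfill hz, fun hz => hS hfill.symm hz⟩
  obtain ⟨V, hV⟩ := hn N hN (fun z => z.getD a) (fun b => ⟨some b, rfl⟩) (Q.indicator 1)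
    fun x => abs_le.2 ⟨by linarith [indicator_one_nonneg Q x], indicator_one_le_one Q x⟩
  have hVQ : β / 2 ≤ density (V ⁻¹' Q) := by
    have hSQ : S = fillNone a ⁻¹' Q := Set.ext fun z => (hQ z).symm
    rw [hSQ] at hβS
    change density (fillNone a ⁻¹' Q) - β / 2 ≤ density (V ⁻¹' Q) at hV
    linarith
  obtain ⟨W, hW⟩ := hn₀ n₀ le_rfl _ hVQ
  refine ⟨subspaceOption (subspaceComp V W), fun w => (hQ _).1 ?_⟩
  rw [fillNone_subspaceOption, subspaceComp_apply]
  exact hW _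

end Insensitive

section SubspaceMeans

variable {κ η ι : Type*} [Fintype κ]

/-- The means of `f` over all `m`-dimensional subspaces are at most `b`. -/
def SubspaceMeansLE (m : ℕ) (f : (ι → κ) → ℝ) (b : ℝ) : Prop :=
  ∀ V : Combinatorics.Subspace (Fin m) κ ι, 𝔼 w, f (V w) ≤ b

lemma SubspaceMeansLE.comp {m : ℕ} {f : (ι → κ) → ℝ} {b : ℝ} (hf : SubspaceMeansLE m f b)
    (V : Combinatorics.Subspace η κ ι) : SubspaceMeansLE m (fun x => f (V x)) b :=
  fun W => by simpa using hf (subspaceComp V W)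

lemma SubspaceMeansLE.append_left {m a b : ℕ} {f : (Fin (a + b) → κ) → ℝ} {c : ℝ}
    (hf : SubspaceMeansLE m f c) (x : Fin a → κ) :
    SubspaceMeansLE m (fun y => f (Fin.append x y)) c := by
  simpa using hf.comp (η := Fin b) (subspaceAppendLeft x default)

lemma SubspaceMeansLE.append_right {m a b : ℕ} {f : (Fin (a + b) → κ) → ℝ} {c : ℝ}
    (hf : SubspaceMeansLE m f c) (y : Fin b → κ) :
    SubspaceMeansLE m (fun x => f (Fin.append x y)) c := by
  simpa using hf.comp (η := Fin a) (subspaceAppendRight default y)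

lemma SubspaceMeansLE.expect_le [Nonempty κ] {m n : ℕ} (hmn : m ≤ n) {f : (Fin n → κ) → ℝ} {b : ℝ}
    (hf : SubspaceMeansLE m f b) : 𝔼 x, f x ≤ b :=
  (exists_subspace_expect_le hmn f).elim fun V hV => hV.trans (hf V)

lemma SubspaceMeansLE.expect_indicator_range_nonpos [Fintype ι] [DecidableEq ι] {m : ℕ}
    {f : (ι → κ) → ℝ} (hf : SubspaceMeansLE m f 0) (V : Combinatorics.Subspace (Fin m) κ ι) :
    𝔼 x, (Set.range V).indicator f x ≤ 0 := by
  classical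
  have hsum : ∑ x, (Set.range V).indicator f x = ∑ w, f (V w) := by
    rw [← sum_image (s := univ) (g := V) fun _ _ _ _ h => subspace_injective V h,
      ← sum_indicator_subset f (subset_univ (univ.image V))]
    simp
  rw [Fintype.expect_eq_sum_div_card, hsum, ← Fintype.card_mul_expect]
  exact div_nonpos_of_nonpos_of_nonneg
    (mul_nonpos_of_nonneg_of_nonpos (Nat.cast_nonneg _) (hf V)) (Nat.cast_nonneg _)

end SubspaceMeans

section SubspaceRemoval

variable {κ : Type*}

open Classical in
/-- A set of the form `range V` contained in `S`, with `V` an `m`-dimensional subspace; the empty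
set if there is none. -/
noncomputable def subspaceIn {ι : Type*} (m : ℕ) (S : Set (ι → κ)) : Set (ι → κ) :=
  if h : ∃ V : Combinatorics.Subspace (Fin m) κ ι, Set.range V ⊆ S then Set.range h.choose else ∅

lemma subspaceIn_subset {ι : Type*} (m : ℕ) (S : Set (ι → κ)) : subspaceIn m S ⊆ S := by
  rw [subspaceIn]
  split_ifs with h
  exacts [h.choose_spec, Set.empty_subset S]

/-- The fibre over `x` of what remains of `S` after removing from each fibre of `S` over the last
`b` coordinates a subspace contained in it. -/
def remainder {a b : ℕ} (m : ℕ) (S : Set (Fin (a + b) → κ)) (x : Fin a → κ) : Set (Fin b → κ) :=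
  {y | Fin.append x y ∈ S ∧ x ∉ subspaceIn m ((Fin.append · y) ⁻¹' S)}

lemma insensitive_remainder {a b m : ℕ} {S : Set (Fin (a + b) → Option κ)} {i : κ}
    (hS : Insensitive i S) (x : Fin a → Option κ) : Insensitive i (remainder m S x) := by
  rintro y y' h ⟨hy, hx⟩
  have hfib : (Fin.append · y') ⁻¹' S = (Fin.append · y) ⁻¹' S := by
    ext u
    exact ⟨fun hu => hS (by rw [fillNone_append, fillNone_append, h]) hu,
      fun hu => hS (by rw [fillNone_append, fillNone_append, h]) hu⟩
  exact ⟨hS (by rw [fillNone_append, fillNone_append, h]) hy, by rwa [hfib]⟩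

variable [Fintype κ]

lemma expect_indicator_eq_subspaceIn_add_remainder {a b : ℕ} (m : ℕ) (S : Set (Fin (a + b) → κ))
    (g : (Fin (a + b) → κ) → ℝ) :
    𝔼 z, S.indicator g z =
      (𝔼 y, 𝔼 x,
        (subspaceIn m ((Fin.append · y) ⁻¹' S)).indicator (fun x => g (Fin.append x y)) x) +
        𝔼 x, 𝔼 y, (remainder m S x).indicator (fun y => g (Fin.append x y)) y := by
  classical
  rw [expect_append, expect_comm (s := (univ : Finset (Fin b → κ))), ← expect_add_distrib]
  refine expect_congr rfl fun x _ => ?_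
  rw [← expect_add_distrib]
  refine expect_congr rfl fun y _ => ?_
  by_cases hx : x ∈ subspaceIn m ((Fin.append · y) ⁻¹' S)
  · have hS : Fin.append x y ∈ S :=
      subspaceIn_subset m ((Fin.append · y) ⁻¹' S) hx
    simp [remainder, hx, hS]
  · simp [remainder, Set.indicator_apply, hx]

lemma SubspaceMeansLE.expect_indicator_le_remainder [Nonempty κ] {a b m : ℕ}
    {f : (Fin (a + b) → κ) → ℝ} (hf : SubspaceMeansLE m f 0) (S : Set (Fin (a + b) → κ)) :
    𝔼 z, S.indicator f z ≤
      𝔼 x, 𝔼 y, (remainder m S x).indicator (fun y => f (Fin.append x y)) y := by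
  rw [expect_indicator_eq_subspaceIn_add_remainder m]
  refine add_le_of_nonpos_left (Finset.expect_le univ_nonempty fun y _ => ?_)
  rw [subspaceIn]
  split_ifs with h
  · exact (hf.append_right y).expect_indicator_range_nonpos _
  · simp

lemma Insensitive.expect_density_remainder_le {a b m : ℕ} {S : Set (Fin (a + b) → Option κ)}
    {i : κ} (hS : Insensitive i S) {β : ℝ} (hβ : 0 ≤ β) (hβS : 2 * β ≤ density S)
    (hsub : ∀ T : Set (Fin a → Option κ), Insensitive i T → β ≤ density T →
      ∃ V : Combinatorics.Subspace (Fin m) (Option κ) (Fin a), ∀ w, V w ∈ T) :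
    𝔼 x, density (remainder m S x) ≤
      density S - β / Fintype.card (Fin a → Option κ) := by
  have hsplit := expect_indicator_eq_subspaceIn_add_remainder m S 1
  have hfib : β ≤ density {y | β ≤ density ((Fin.append · y) ⁻¹' S)} := by
    rw [density_eq_expect_density_append] at hβS
    linarith [expect_le_density_add
      (fun y : Fin b → Option κ => density_le_one ((Fin.append · y) ⁻¹' S)) hβ]
  have hremoved : β / Fintype.card (Fin a → Option κ) ≤
      𝔼 y : Fin b → Option κ, density (subspaceIn m ((Fin.append · y) ⁻¹' S)) :=
    calc β / Fintype.card (Fin a → Option κ)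
        ≤ 𝔼 y, {y | β ≤ density ((Fin.append · y) ⁻¹' S)}.indicator 1 y *
            (Fintype.card (Fin a → Option κ) : ℝ)⁻¹ := by
          rw [← expect_mul, div_eq_mul_inv]
          gcongr
          exact hfib
      _ ≤ _ := by
          refine expect_le_expect fun y _ => ?_
          by_cases hy : β ≤ density ((Fin.append · y) ⁻¹' S)
          · have hins : Insensitive i ((Fin.append · y) ⁻¹' S) :=
              fun x x' h => hS (by rw [fillNone_append, fillNone_append, h])
            obtain ⟨V, hV⟩ := hsub _ hins hy
            have hne : (subspaceIn m ((Fin.append · y) ⁻¹' S)).Nonempty := by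
              rw [subspaceIn, dif_pos ⟨V, Set.range_subset_iff.2 hV⟩]
              exact Set.range_nonempty _
            simpa [hy] using inv_card_le_density hne
          · simpa [hy] using density_nonneg _
  change density S = 𝔼 y, density _ + 𝔼 x, density _ at hsplit
  linarith

end SubspaceRemoval

section InsensitiveSets

variable {κ : Type*} [Fintype κ]

lemma expect_indicator_le_density {Ω : Type*} [Fintype Ω] {f : Ω → ℝ} (hf : ∀ x, f x ≤ 1)
    (S : Set Ω) : 𝔼 x, S.indicator f x ≤ density S :=
  expect_le_expect fun _ _ => Set.indicator_le_indicator (hf _)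

lemma DensityHalesJewett.exists_expect_indicator_le_pow (h : DensityHalesJewett κ) (m : ℕ)
    {β : ℝ} (hβ : 0 < β) :
    ∃ M : ℕ, ∃ τ ∈ Set.Ioc (0 : ℝ) 1, ∀ T N, M * T ≤ N → ∀ f : (Fin N → Option κ) → ℝ,
      (∀ z, f z ≤ 1) → SubspaceMeansLE m f 0 → ∀ a S, Insensitive a S →
        𝔼 z, S.indicator f z ≤ β + (1 - τ) ^ T * density S := by
  obtain ⟨M, hM⟩ := h.exists_subspace_of_insensitive m (half_pos hβ)
  set K : ℝ := (Fintype.card (Fin M → Option κ) : ℝ)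
  have : 0 < K := Nat.cast_pos.2 Fintype.card_pos
  set τ := min 1 (β / 2 / K)
  have hτ₀ : 0 < τ := by positivity
  have hτ₁ : τ ≤ 1 := min_le_left ..
  refine ⟨M, τ, ⟨hτ₀, hτ₁⟩, fun T => ?_⟩
  induction T with
  | zero =>
    intro N _ f hf _ a S _
    linarith [expect_indicator_le_density hf S]
  | succ T ih =>
    intro N hN f hf hmeans a S hS
    obtain ⟨c, rfl⟩ := Nat.exists_eq_add_of_le (show M ≤ N by nlinarith)
    have : 0 ≤ (1 - τ) ^ T := pow_nonneg (by linarith) T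
    rcases lt_or_ge (density S) β with hSβ | hSβ
    · have : 0 ≤ (1 - τ) ^ (T + 1) * density S :=
        mul_nonneg (pow_nonneg (by linarith) _) (density_nonneg S)
      linarith [expect_indicator_le_density hf S]
    have hloss : 𝔼 x, density (remainder m S x) ≤ (1 - τ) * density S := by
      have := hS.expect_density_remainder_le (half_pos hβ).le (by linarith) (hM M le_rfl a)
      have : τ * density S ≤ β / 2 / K :=
        (mul_le_of_le_one_right hτ₀.le (density_le_one S)).trans (min_le_right ..)
      linarith
    calc 𝔼 z, S.indicator f z
        ≤ 𝔼 x, 𝔼 y, (remainder m S x).indicator (fun y => f (Fin.append x y)) y :=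
          hmeans.expect_indicator_le_remainder S
      _ ≤ 𝔼 x, (β + (1 - τ) ^ T * density (remainder m S x)) :=
          expect_le_expect fun x _ => ih c (by linarith) _ (fun y => hf _) (hmeans.append_left x)
            a _ (insensitive_remainder hS x)
      _ = β + (1 - τ) ^ T * 𝔼 x, density (remainder m S x) := by
          rw [expect_add_distrib, Fintype.expect_const, mul_expect]
      _ ≤ β + (1 - τ) ^ (T + 1) * density S := by
          rw [pow_succ, mul_assoc]
          gcongr

lemma DensityHalesJewett.exists_expect_indicator_le (h : DensityHalesJewett κ) (m : ℕ)
    {β : ℝ} (hβ : 0 < β) :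
    ∃ n, ∀ N ≥ n, ∀ f : (Fin N → Option κ) → ℝ, (∀ z, f z ≤ 1) → ∀ b ≥ 0,
      SubspaceMeansLE m f b → ∀ a S, Insensitive a S → 𝔼 z, S.indicator f z ≤ b + β := by
  obtain ⟨M, τ, ⟨hτ₀, hτ₁⟩, hM⟩ := h.exists_expect_indicator_le_pow m (half_pos hβ)
  obtain ⟨T, hT⟩ := exists_pow_lt_of_lt_one (half_pos hβ) (show 1 - τ < 1 by linarith)
  refine ⟨M * T, fun N hN f hf b hb hmeans a S hS => ?_⟩
  have hle := hM T N hN (fun z => f z - b) (fun z => by linarith [hf z])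
    (fun V => by rw [expect_sub_distrib, Fintype.expect_const]; linarith [hmeans V]) a S hS
  have hshift : 𝔼 z, S.indicator (fun z => f z - b) z = 𝔼 z, S.indicator f z - b * density S := by
    rw [density, mul_expect, ← expect_sub_distrib]
    exact expect_congr rfl fun z _ => by by_cases hz : z ∈ S <;> simp [hz]
  have : (1 - τ) ^ T * density S ≤ (1 - τ) ^ T :=
    mul_le_of_le_one_right (pow_nonneg (by linarith) T) (density_le_one S)
  have : b * density S ≤ b := mul_le_of_le_one_right hb (density_le_one S)
  linarith

theorem DensityHalesJewett.exists_expect_indicator_iInter_le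
    (h : DensityHalesJewett κ) (s : Finset κ) (m : ℕ) {β : ℝ} (hβ : 0 < β) :
    ∃ n, ∀ N ≥ n, ∀ f : (Fin N → Option κ) → ℝ, (∀ z, f z ≤ 1) → SubspaceMeansLE m f 0 →
      ∀ S : κ → Set (Fin N → Option κ), (∀ a, Insensitive a (S a)) →
        𝔼 z, (⋂ a ∈ s, S a).indicator f z ≤ β := by
  classical
  induction s using Finset.induction_on generalizing m β with
  | empty =>
    refine ⟨m, fun N hN f _ hmeans S _ => ?_⟩
    simpa using (hmeans.expect_le hN).trans hβ.le
  | insert a s _ ih =>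
    obtain ⟨n', hn'⟩ := ih m (half_pos hβ)
    obtain ⟨n, hn⟩ := h.exists_expect_indicator_le n' (half_pos hβ)
    refine ⟨n, fun N hN f hf hmeans S hS => ?_⟩
    have hmeans' : SubspaceMeansLE n' ((⋂ a ∈ s, S a).indicator f) (β / 2) := fun V => by
      have hV := hn' n' le_rfl _ (fun w => hf (V w)) (hmeans.comp V) (fun a => V ⁻¹' S a)
        fun a => (hS a).preimage V
      have hpre : ⋂ a ∈ s, V ⁻¹' S a = V ⁻¹' ⋂ a ∈ s, S a := by simp only [Set.preimage_iInter]
      rw [hpre] at hV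
      exact hV
    have hle := hn N hN _ (Set.indicator_le' (fun z _ => hf z) fun _ _ => zero_le_one) _
      (half_pos hβ).le hmeans' a (S a) (hS a)
    rw [set_biInter_insert, ← add_halves β]
    simpa only [Set.indicator_indicator] using hle

end InsensitiveSets

section ExtremalDensity

variable {κ : Type*} [Fintype κ]

/-- `d` is the limit of the maximal densities of line-free sets in `Fin n → κ`. -/
structure IsExtremalDensity (κ : Type*) [Fintype κ] (d : ℝ) : Prop where
  density_lt : ∀ ε > 0, ∃ n, ∀ N ≥ n, ∀ A : Set (Fin N → κ), LineFree A → density A < d + ε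
  exists_le_density : ∀ ε > 0, ∀ n, ∃ A : Set (Fin n → κ), LineFree A ∧ d - ε ≤ density A

lemma exists_isExtremalDensity [Nonempty κ] (h : ¬DensityHalesJewett κ) :
    ∃ d > 0, IsExtremalDensity κ d := by
  let S : Set ℝ := {δ | ∀ n, ∃ A : Set (Fin n → κ), LineFree A ∧ δ ≤ density A}
  have hbdd : BddAbove S := ⟨1, fun δ hδ => by
    obtain ⟨A, -, hA⟩ := hδ 0
    exact hA.trans (density_le_one A)⟩
  obtain ⟨δ, hδ, hδS⟩ : ∃ δ > 0, δ ∈ S := by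
    rw [DensityHalesJewett] at h
    push Not at h
    exact h
  refine ⟨sSup S, hδ.trans_le (le_csSup hbdd hδS), ⟨fun ε hε => ?_, fun ε hε n => ?_⟩⟩
  · have hnot : sSup S + ε ∉ S := fun hmem => by linarith [le_csSup hbdd hmem]
    simp only [S, Set.mem_ofPred_eq, not_forall, not_exists, not_and, not_le] at hnot
    obtain ⟨n, hn⟩ := hnot
    refine ⟨n, fun N hN A hA => ?_⟩
    obtain ⟨B, hB, hAB⟩ := hA.exists_density_le hN
    exact hAB.trans_lt (hn B hB)
  · obtain ⟨δ', hδ', hlt⟩ := exists_lt_of_lt_csSup ⟨δ, hδS⟩ (show sSup S - ε < sSup S by linarith)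
    obtain ⟨A, hA, hA'⟩ := hδ' n
    exact ⟨A, hA, by linarith⟩

lemma le_of_forall_le_of_le_expect {Ω : Type*} [Fintype Ω] {f : Ω → ℝ} {d ε : ℝ}
    (hf : ∀ x, f x ≤ d + ε) (hmean : d - ε ≤ 𝔼 x, f x) (x : Ω) :
    d + ε - 2 * ε * Fintype.card Ω ≤ f x := by
  have : Nonempty Ω := ⟨x⟩
  have hle : d + ε - f x ≤ ∑ y, (d + ε - f y) :=
    single_le_sum (f := fun y => d + ε - f y) (fun y _ => by linarith [hf y]) (mem_univ x)
  have hsum : ∑ y, (d + ε - f y) = Fintype.card Ω * (d + ε - 𝔼 y, f y) := by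
    rw [mul_sub, Fintype.card_mul_expect, sum_sub_distrib, sum_const, card_univ, nsmul_eq_mul]
  have : Fintype.card Ω * (d + ε - 𝔼 y, f y) ≤ Fintype.card Ω * (2 * ε) := by
    gcongr
    linarith
  linarith

/-- The fibres of a nearly extremal set over the last coordinates cover the points nearly
uniformly, since no fibre over the first coordinates is much denser than `d`. -/
lemma IsExtremalDensity.exists_lineFree_family [Nonempty κ] {d : ℝ} (h : IsExtremalDensity κ d)
    (m : ℕ) {ε : ℝ} (hε : 0 < ε) :
    ∃ c, ∃ A : (Fin c → κ) → Set (Fin m → κ), (∀ y, LineFree (A y)) ∧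
      ∀ w, d - ε ≤ 𝔼 y, (A y).indicator 1 w := by
  set K : ℝ := (Fintype.card (Fin m → κ) : ℝ)
  have : 0 < K := Nat.cast_pos.2 Fintype.card_pos
  have hε' : 0 < ε / (2 * K) := by positivity
  obtain ⟨c, hc⟩ := h.density_lt _ hε'
  obtain ⟨A, hA, hAd⟩ := h.exists_le_density _ hε' (m + c)
  rw [density, expect_append] at hAd
  refine ⟨c, fun y => (Fin.append · y) ⁻¹' A, fun y => ?_, fun w => ?_⟩
  · simpa [Set.preimage, Function.comp_def] using
      hA.preimage (subspaceAppendRight (η := Fin m) default y)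
  · have hfib (w : Fin m → κ) : 𝔼 y : Fin c → κ, A.indicator 1 (Fin.append w y) ≤
        d + ε / (2 * K) :=
      (hc c le_rfl (Fin.append w ⁻¹' A)
        (by simpa [Set.preimage, Function.comp_def] using
          hA.preimage (subspaceAppendLeft (η := Fin c) w default))).le
    have hlow := le_of_forall_le_of_le_expect hfib hAd w
    have hK : 2 * (ε / (2 * K)) * K = ε := by field_simp
    change _ ≤ 𝔼 y : Fin c → κ, A.indicator 1 (Fin.append w y)
    rw [hK] at hlow
    linarith

end ExtremalDensity

section InductionStep

variable {κ ι : Type*}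

/-- The words which, once `none` is replaced by `a`, lie in `A`. -/
def fillings (A : Set (ι → Option κ)) (a : κ) : Set (ι → Option κ) :=
  {z | some ∘ fillNone a z ∈ A}

lemma insensitive_fillings (A : Set (ι → Option κ)) (a : κ) : Insensitive a (fillings A a) :=
  fun z z' h hz => by
    change some ∘ fillNone a z' ∈ A
    rwa [← h]

lemma LineFree.ne_none_of_mem_fillings {A : Set (ι → Option κ)} (hA : LineFree A)
    {z : ι → Option κ} (hz : z ∈ A) (hfill : ∀ a, z ∈ fillings A a) (j : ι) : z j ≠ none := by
  intro hj
  let l : Line (Option κ) ι := ⟨fun i => (z i).map some, j, by simp [hj]⟩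
  have hnone : l none = z := by
    ext1 i
    cases h : z i <;> simp [l, Line.coe_apply, h]
  have hsome (a : κ) : l (some a) = some ∘ fillNone a z := by
    ext1 i
    cases h : z i <;> simp [l, Line.coe_apply, fillNone, h]
  obtain ⟨a, ha⟩ := hA l
  cases a with
  | none => exact ha (hnone ▸ hz)
  | some a => exact ha (hsome a ▸ hfill a)

variable [Fintype κ]

lemma density_forall_ne_none (n : ℕ) :
    density {w : Fin n → Option κ | ∀ j, w j ≠ none} =
      (Fintype.card κ / (Fintype.card κ + 1) : ℝ) ^ n := by
  classical
  have hletter : 𝔼 o : Option κ, (if o = none then (0 : ℝ) else 1) =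
      Fintype.card κ / (Fintype.card κ + 1) := by
    rw [Fintype.expect_eq_sum_div_card, Fintype.sum_option]
    simp
  rw [← hletter, expect_pow, density, Fintype.piFinset_univ]
  refine expect_congr rfl fun w _ => ?_
  by_cases hw : ∀ j, w j ≠ none
  · rw [Set.indicator_of_mem (by exact hw)]
    exact (prod_eq_one fun j _ => if_neg (hw j)).symm
  · rw [Set.indicator_of_notMem (by exact hw)]
    obtain ⟨j, hj⟩ : ∃ j, w j = none := by simpa using hw
    exact (Finset.prod_eq_zero (mem_univ j) (by simp [hj])).symm

open Classical in
/-- The sets `S a` and their complements generate a partition into `2 ^ card κ` cells. -/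
lemma expect_le_expect_indicator_iInter_add {Ω : Type*} [Fintype Ω] (g : Ω → ℝ) (S : κ → Set Ω)
    {β : ℝ} (hβ : 0 ≤ β)
    (h : ∀ p : Finset κ, 𝔼 z, (⋂ a, if a ∈ p then S a else (S a)ᶜ).indicator g z ≤ β) :
    𝔼 z, g z ≤ 𝔼 z, (⋂ a, S a).indicator g z + 2 ^ Fintype.card κ * β := by
  set cell : Finset κ → Set Ω := fun p => ⋂ a, if a ∈ p then S a else (S a)ᶜ
  have hcell (z : Ω) (p : Finset κ) : z ∈ cell p ↔ p = ({a | z ∈ S a} : Finset κ) := by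
    simp only [cell, Set.mem_iInter, Finset.ext_iff, mem_filter_univ]
    exact forall_congr' fun a => by by_cases ha : a ∈ p <;> simp [ha]
  have hsum : 𝔼 z, g z = ∑ p, 𝔼 z, (cell p).indicator g z := by
    rw [← expect_sum_comm]
    refine expect_congr rfl fun z _ => ?_
    rw [Fintype.sum_eq_single ({a | z ∈ S a} : Finset κ) fun p hp =>
      Set.indicator_of_notMem (by rwa [hcell]) g, Set.indicator_of_mem (by rw [hcell])]
  have huniv : cell univ = ⋂ a, S a := by simp [cell]
  rw [hsum, ← add_sum_erase univ _ (mem_univ univ), huniv]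
  gcongr
  calc ∑ p ∈ univ.erase univ, 𝔼 z, (cell p).indicator g z
      ≤ #(univ.erase (univ : Finset κ)) • β := sum_le_card_nsmul _ _ β fun p _ => h p
    _ ≤ #(univ : Finset (Finset κ)) • β := nsmul_le_nsmul_left hβ (card_le_card (erase_subset ..))
    _ = 2 ^ Fintype.card κ * β := by simp

/-- A set `A` of density nearly `d` meeting no word with a letter `none` in `⋂ a, S a` is sparser
than `d` there, so it has a density increment on another cell of the partition. -/
lemma mul_density_iInter_le [Fintype ι] [DecidableEq ι] {d ζ : ℝ} (hζ : 0 ≤ ζ)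
    {A : Set (ι → Option κ)} {S : κ → Set (ι → Option κ)} (hS : ∀ a, Insensitive a (S a))
    (hcells : ∀ T : κ → Set (ι → Option κ), (∀ a, Insensitive a (T a)) →
      𝔼 z, (⋂ a, T a).indicator (fun z => A.indicator 1 z - (d + ζ)) z ≤ ζ / 2 ^ Fintype.card κ)
    (hA : d - ζ ≤ density A) (hAS : ∀ z ∈ A, z ∈ ⋂ a, S a → ∀ j, z j ≠ none) :
    d * density (⋂ a, S a) ≤ density {z : ι → Option κ | ∀ j, z j ≠ none} + 3 * ζ := by
  classical
  set N : Set (ι → Option κ) := {z | ∀ j, z j ≠ none}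
  have hpart := expect_le_expect_indicator_iInter_add (fun z => A.indicator 1 z - (d + ζ)) S
    (by positivity) fun p => hcells (fun a => if a ∈ p then S a else (S a)ᶜ) fun a => by
      by_cases ha : a ∈ p <;> simp only [ha, if_true, if_false]
      exacts [hS a, (hS a).compl]
  rw [mul_div_cancel₀ ζ (by positivity), expect_sub_distrib, Fintype.expect_const] at hpart
  change density A - (d + ζ) ≤ _ at hpart
  have hinter : 𝔼 z, (⋂ a, S a).indicator (fun z => A.indicator 1 z - (d + ζ)) z ≤
      density N - d * density (⋂ a, S a) := by
    rw [density, density, mul_expect, ← expect_sub_distrib]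
    refine expect_le_expect fun z _ => ?_
    by_cases hz : z ∈ ⋂ a, S a
    · rw [Set.indicator_of_mem hz, Set.indicator_of_mem hz, Pi.one_apply]
      by_cases hzA : z ∈ A
      · rw [Set.indicator_of_mem hzA, Set.indicator_of_mem (show z ∈ N from hAS z hzA hz)]
        linarith
      · rw [Set.indicator_of_notMem hzA]
        linarith [indicator_one_nonneg N z]
    · rw [Set.indicator_of_notMem hz, Set.indicator_of_notMem hz]
      linarith [indicator_one_nonneg N z]
  linarith

lemma DensityHalesJewett.exists_surjective_le_expect_fillings [Nonempty κ]
    (h : DensityHalesJewett κ) {δ : ℝ} (hδ : 0 < δ) :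
    ∃ M, ∃ θ > (0 : ℝ), ∀ (Y : Type*) [Fintype Y] (n : ℕ) (A : Y → Set (Fin n → Option κ)),
      (∀ w, δ ≤ 𝔼 y, (A y).indicator 1 w) →
      ∃ ρ : Fin M ⊕ κ → Option κ, Function.Surjective ρ ∧
        θ ≤ 𝔼 y, 𝔼 s : Fin n → Fin M ⊕ κ, (⋂ a, fillings (A y) a).indicator 1 (ρ ∘ s) := by
  classical
  obtain ⟨M, θ, hθ, hM⟩ := h.exists_common_line hδ
  refine ⟨M, θ, hθ, fun Y _ n A hA => ?_⟩
  let B (p : Y × (Fin n → Fin M ⊕ κ)) : Set (Fin M → κ) :=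
    {x | (some ∘ Sum.elim x id ∘ p.2) ∈ A p.1}
  have hB : δ ≤ 𝔼 p, density (B p) := by
    simp only [density]
    rw [← univ_product_univ, expect_product, expect_comm]
    refine le_expect univ_nonempty fun s _ => ?_
    rw [expect_comm]
    exact le_expect univ_nonempty fun x _ => hA (some ∘ Sum.elim x id ∘ s)
  obtain ⟨l, hl⟩ := hM _ B hB
  refine ⟨Sum.elim l.idxFun some, fun o => ?_, hl.trans_eq ?_⟩
  · cases o with
    | none => exact l.proper.imp' Sum.inl fun _ hi => hi
    | some a => exact ⟨Sum.inr a, rfl⟩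
  · rw [density, ← univ_product_univ, expect_product]
    refine expect_congr rfl fun y _ => expect_congr rfl fun s _ => ?_
    have hword (a : κ) : some ∘ Sum.elim (l a) id ∘ s =
        some ∘ fillNone a (Sum.elim l.idxFun some ∘ s) := by
      ext1 j
      cases hj : s j <;> simp [fillNone, hj, Line.coe_apply]
    simp only [B, Set.indicator_apply, Set.mem_ofPred_eq, Set.mem_iInter, fillings, hword,
      Pi.one_apply]

lemma expect_indicator_add_mul_indicator_sub {Ω : Type*} [Fintype Ω] [Nonempty Ω] (D A : Set Ω)
    (r c : ℝ) : 𝔼 x, (D.indicator 1 x + r * (A.indicator 1 x - c)) =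
      density D + r * (density A - c) := by
  rw [expect_add_distrib, ← mul_expect, expect_sub_distrib, Fintype.expect_const, density, density]

lemma abs_indicator_add_mul_indicator_sub_le {Ω : Type*} (D A : Set Ω) {r c : ℝ} (hr : 0 ≤ r)
    (hc : 0 ≤ c) (x : Ω) :
    |D.indicator 1 x + r * (A.indicator 1 x - c)| ≤ 1 + r * (1 + c) := by
  refine (abs_add_le _ _).trans (add_le_add ?_ ?_)
  · rw [abs_of_nonneg (indicator_one_nonneg D x)]
    exact indicator_one_le_one D x
  · rw [abs_mul, abs_of_nonneg hr]
    gcongr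
    exact abs_le.2 ⟨by linarith [indicator_one_nonneg A x],
      by linarith [indicator_one_le_one A x]⟩

lemma IsExtremalDensity.exists_subspace_fillings [Nonempty κ] {d : ℝ}
    (hd : IsExtremalDensity (Option κ) d) (hd₀ : 0 < d) (h : DensityHalesJewett κ) :
    ∃ θ > 0, ∀ ζ > 0, ∃ m₀, ∀ m ≥ m₀, ∃ n, ∃ A : Set (Fin n → Option κ), LineFree A ∧
      ∃ V : Combinatorics.Subspace (Fin m) (Option κ) (Fin n),
        d - ζ ≤ density (V ⁻¹' A) ∧ θ ≤ density (V ⁻¹' ⋂ a, fillings A a) := by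
  obtain ⟨M, θ, hθ, hM⟩ := h.exists_surjective_le_expect_fillings (half_pos hd₀)
  refine ⟨θ / 2, half_pos hθ, fun ζ hζ => ?_⟩
  set ε := min (d / 2) (θ * ζ / 8)
  have hε : 0 < ε := by positivity
  have hεd : ε ≤ d / 2 := min_le_left ..
  have hεθ : ζ⁻¹ * (2 * ε) ≤ θ / 4 := by
    rw [inv_mul_le_iff₀ hζ]
    linarith [min_le_right (d / 2) (θ * ζ / 8)]
  obtain ⟨m₀, hm₀⟩ := hd.density_lt ε hε
  refine ⟨m₀, fun m hm => ?_⟩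
  obtain ⟨n, hn⟩ := exists_subspace_expect_comp_sub_le (E := Fin M ⊕ κ) (B := Option κ) m
    (K := 1 + ζ⁻¹ * (1 + (d + ε))) (show 0 < θ / 4 by positivity)
  obtain ⟨c, A, hA, hAd⟩ := hd.exists_lineFree_family n hε
  obtain ⟨ρ, hρ, hfill⟩ := hM _ n A fun w => by linarith [hAd w]
  -- A large mean of this function on a subspace forces the fillings to be dense there, as no
  -- subspace meets `A y` in density above `d + ε`, and `A y` not to be much sparser than `d`.
  let Φ (y : Fin c → Option κ) (x : Fin n → Option κ) : ℝ :=
    (⋂ a, fillings (A y) a).indicator 1 x + ζ⁻¹ * ((A y).indicator 1 x - (d + ε))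
  have hΦ (y) (x) : |Φ y x| ≤ 1 + ζ⁻¹ * (1 + (d + ε)) :=
    abs_indicator_add_mul_indicator_sub_le _ (A y) (inv_pos.2 hζ).le (by positivity) x
  have hmean : 3 * θ / 4 ≤ 𝔼 y, 𝔼 s : Fin n → Fin M ⊕ κ, Φ y (ρ ∘ s) := by
    have hAmean : d - ε ≤ 𝔼 y, 𝔼 s : Fin n → Fin M ⊕ κ, (A y).indicator 1 (ρ ∘ s) := by
      rw [expect_comm]
      exact le_expect univ_nonempty fun s _ => hAd _
    have hζA := mul_le_mul_of_nonneg_left hAmean (inv_pos.2 hζ).le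
    simp only [Φ, expect_add_distrib, ← mul_expect, expect_sub_distrib, Fintype.expect_const]
    linarith
  obtain ⟨y, -, hy⟩ := exists_le_of_le_expect univ_nonempty hmean
  obtain ⟨V, hV⟩ := hn n le_rfl ρ hρ (Φ y) (hΦ y)
  have hVΦ : θ / 2 ≤
      density (V ⁻¹' ⋂ a, fillings (A y) a) + ζ⁻¹ * (density (V ⁻¹' A y) - (d + ε)) := by
    rw [← expect_indicator_add_mul_indicator_sub]
    exact (show θ / 2 ≤ _ by linarith).trans hV
  have hlt := hm₀ m hm _ ((hA y).preimage V)
  refine ⟨n, A y, hA y, V, ?_, ?_⟩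
  · have : -1 ≤ ζ⁻¹ * (density (V ⁻¹' A y) - (d + ε)) := by
      linarith [density_le_one (V ⁻¹' ⋂ a, fillings (A y) a)]
    rw [le_inv_mul_iff₀ hζ] at this
    linarith
  · have : ζ⁻¹ * (density (V ⁻¹' A y) - (d + ε)) ≤ 0 :=
      mul_nonpos_of_nonneg_of_nonpos (inv_pos.2 hζ).le (by linarith)
    linarith

lemma IsExtremalDensity.exists_expect_indicator_sub_le [Nonempty κ] {d : ℝ}
    (hd : IsExtremalDensity (Option κ) d) (h : DensityHalesJewett κ) (hd₀ : 0 < d) {ζ β : ℝ}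
    (hζ : 0 < ζ) (hβ : 0 < β) :
    ∃ n, ∀ N ≥ n, ∀ A : Set (Fin N → Option κ), LineFree A →
      ∀ T : κ → Set (Fin N → Option κ), (∀ a, Insensitive a (T a)) →
        𝔼 z, (⋂ a, T a).indicator (fun z => A.indicator 1 z - (d + ζ)) z ≤ β := by
  obtain ⟨m, hm⟩ := hd.density_lt ζ hζ
  obtain ⟨n, hn⟩ := h.exists_expect_indicator_iInter_le univ m hβ
  refine ⟨n, fun N hN A hA T hT => ?_⟩
  simpa using hn N hN _ (fun z => by linarith [indicator_one_le_one A z]) (fun V => by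
    rw [expect_sub_distrib, Fintype.expect_const, sub_nonpos]
    exact (hm m le_rfl _ (hA.preimage V)).le) T hT

theorem DensityHalesJewett.option [Nonempty κ] (h : DensityHalesJewett κ) :
    DensityHalesJewett (Option κ) := by
  by_contra hcon
  obtain ⟨d, hd₀, hd⟩ := exists_isExtremalDensity hcon
  obtain ⟨θ, hθ, hsub⟩ := hd.exists_subspace_fillings hd₀ h
  have hζ : 0 < d * θ / 8 := by positivity
  obtain ⟨m₁, hm₁⟩ := hsub _ hζ
  obtain ⟨m₂, hm₂⟩ := hd.exists_expect_indicator_sub_le h hd₀ hζ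
    (show 0 < d * θ / 8 / 2 ^ Fintype.card κ by positivity)
  have hcard : (Fintype.card κ / (Fintype.card κ + 1) : ℝ) < 1 := by
    rw [div_lt_one (by positivity)]
    linarith
  obtain ⟨m₃, hm₃⟩ := exists_pow_lt_of_lt_one hζ hcard
  let m := max m₁ (max m₂ m₃)
  obtain ⟨n, A, hA, V, hVA, hVfill⟩ := hm₁ m (le_max_left ..)
  have hcontra := mul_density_iInter_le hζ.le
    (fun a => (insensitive_fillings A a).preimage V)
    (hm₂ m ((le_max_left ..).trans (le_max_right ..)) _ (hA.preimage V)) hVA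
    fun w hwA hwfill j hj => by
      obtain ⟨i, hi⟩ := V.proper j
      exact hA.ne_none_of_mem_fillings hwA (by simpa using hwfill) i
        (by rw [Combinatorics.Subspace.apply_inr hi, hj])
  have hpow : density {w : Fin m → Option κ | ∀ j, w j ≠ none} < d * θ / 8 := by
    rw [density_forall_ne_none]
    exact (pow_le_pow_of_le_one (by positivity) hcard.le
      ((le_max_right ..).trans (le_max_right ..))).trans_lt hm₃
  rw [← Set.preimage_iInter] at hcontra
  have : d * θ ≤ d * density (V ⁻¹' ⋂ a, fillings A a) := by gcongr
  linarith

end InductionStep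

section AllAlphabets

variable {κ κ' : Type*}

lemma LineFree.arrowCongr {ι : Type*} {A : Set (ι → κ')} (hA : LineFree A) (e : κ ≃ κ') :
    LineFree ((e ∘ ·) ⁻¹' A : Set (ι → κ)) := fun l => by
  obtain ⟨a, ha⟩ := hA (l.map e)
  exact ⟨e.symm a, by simpa [← Line.map_apply] using ha⟩

variable [Fintype κ] [Fintype κ']

lemma DensityHalesJewett.of_equiv (e : κ ≃ κ') (h : DensityHalesJewett κ) :
    DensityHalesJewett κ' := fun δ hδ => by
  obtain ⟨n, hn⟩ := h δ hδ
  refine ⟨n, fun A hA => ?_⟩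
  rw [show density A = density ((e ∘ ·) ⁻¹' A : Set (Fin n → κ)) from
    (Fintype.expect_equiv (Equiv.arrowCongr (Equiv.refl _) e) _ _ fun _ => rfl).symm]
  exact hn _ (hA.arrowCongr e)

lemma densityHalesJewett_of_subsingleton [Subsingleton κ] : DensityHalesJewett κ := fun δ hδ => by
  refine ⟨1, fun A hA => ?_⟩
  obtain ⟨a, ha⟩ := hA (Line.diagonal κ (Fin 1))
  have hempty : A = ∅ := Set.eq_empty_of_forall_notMem fun x hx =>
    ha (by rwa [Subsingleton.elim (Line.diagonal κ (Fin 1) a) x])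
  simpa [hempty, density] using hδ

theorem densityHalesJewett_fin_succ (n : ℕ) : DensityHalesJewett (Fin (n + 1)) := by
  induction n with
  | zero => exact densityHalesJewett_of_subsingleton (κ := Fin 1)
  | succ n ih => exact ih.option.of_equiv (finSuccEquiv (n + 1)).symm

end AllAlphabets

section FiniteAbelianGroup

lemma expect_comp_addMonoidHom {H G : Type*} [AddGroup H] [Fintype H] [AddGroup G] [Fintype G]
    (φ : H →+ G) (hφ : Function.Surjective φ) (F : G → ℝ) : 𝔼 p, F (φ p) = 𝔼 g, F g := by
  have translate (g : G) : 𝔼 p, F (φ p) = 𝔼 p, F (φ p + g) := by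
    obtain ⟨r, rfl⟩ := hφ g
    exact (Fintype.expect_equiv (Equiv.addRight r) _ _ fun p => by simp).symm
  calc 𝔼 p, F (φ p) = 𝔼 g, 𝔼 p, F (φ p + g) := by
        rw [← Fintype.expect_const (ι := G) (𝔼 p, F (φ p))]
        exact expect_congr rfl fun g _ => translate g
    _ = 𝔼 p, 𝔼 g, F (φ p + g) := expect_comm ..
    _ = 𝔼 _p : H, 𝔼 g, F g := expect_congr rfl fun p _ =>
        Fintype.expect_equiv (Equiv.addLeft (φ p)) _ _ fun g => rfl
    _ = 𝔼 g, F g := Fintype.expect_const _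

variable {G : Type*} [AddCommGroup G] {q n : ℕ}

/-- The preimage of `A ⊆ G` under `x ↦ a + ∑ i, x i • g i`, a subset of the combinatorial cube. -/
def cubePreimage (A : Set G) (p : G × (Fin n → G)) : Set (Fin n → Fin q) :=
  {x | p.1 + ∑ i, (x i : ℕ) • p.2 i ∈ A}

lemma expect_density_cubePreimage [Fintype G] [NeZero q] (A : Set G) :
    𝔼 p : G × (Fin n → G), density (cubePreimage A p : Set (Fin n → Fin q)) = density A := by
  have translate (g : Fin n → G) (x : Fin n → Fin q) :
      𝔼 a, (cubePreimage A (a, g)).indicator (1 : (Fin n → Fin q) → ℝ) x = density A :=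
    Fintype.expect_equiv (Equiv.addRight (∑ i, (x i : ℕ) • g i)) _ _ fun a => rfl
  calc 𝔼 p : G × (Fin n → G), density (cubePreimage A p : Set (Fin n → Fin q))
    _ = 𝔼 x : Fin n → Fin q, 𝔼 g, 𝔼 a, (cubePreimage A (a, g)).indicator 1 x := by
        simp only [density]
        rw [expect_comm, ← univ_product_univ]
        exact expect_congr rfl fun x _ => by rw [expect_product, expect_comm]
    _ = density A := by simp only [translate, Fintype.expect_const]

/-- The first point and the common difference of the progression in `G` traced by the line `l`
of the combinatorial cube under `x ↦ a + ∑ i, x i • g i`. -/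
def lineProgression (l : Line (Fin q) (Fin n)) : G × (Fin n → G) →+ G × G :=
  AddMonoidHom.mk' (fun p => (p.1 + ∑ i, (l.idxFun i).elim 0 (fun a : Fin q => (a : ℕ) • p.2 i),
    ∑ i, (l.idxFun i).elim (p.2 i) (fun _ => 0))) fun p r => by
    ext
    · simp only [Prod.fst_add, Prod.snd_add]
      rw [add_add_add_comm, ← sum_add_distrib]
      congr 1
      exact sum_congr rfl fun i _ => by cases l.idxFun i <;> simp
    · simp only [Prod.snd_add, ← sum_add_distrib]
      exact sum_congr rfl fun i _ => by cases l.idxFun i <;> simp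

lemma lineProgression_surjective (l : Line (Fin q) (Fin n)) :
    Function.Surjective (lineProgression (G := G) l) := by
  rintro ⟨a, d⟩
  obtain ⟨i₀, hi₀⟩ := l.proper
  refine ⟨(a, Pi.single i₀ d), Prod.ext (add_eq_left.2 (sum_eq_zero fun i _ => ?_)) ?_⟩
  · rcases eq_or_ne i i₀ with rfl | hi
    · simp [hi₀]
    · cases l.idxFun i <;> simp [hi]
  · refine (Fintype.sum_eq_single i₀ fun i hi => ?_).trans (by simp [hi₀])
    cases l.idxFun i <;> simp [hi]

lemma add_sum_line_nsmul (l : Line (Fin q) (Fin n)) (p : G × (Fin n → G)) (j : Fin q) :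
    p.1 + ∑ i, (l j i : ℕ) • p.2 i =
      (lineProgression l p).1 + (j : ℕ) • (lineProgression l p).2 := by
  simp only [lineProgression, AddMonoidHom.mk'_apply]
  rw [add_assoc, smul_sum, ← sum_add_distrib]
  congr 1
  refine sum_congr rfl fun i _ => ?_
  rw [Line.coe_apply]
  cases l.idxFun i <;> simp

theorem exists_le_density_progressions (q : ℕ) [NeZero q] {α : ℝ} (hα : 0 < α) :
    ∃ c > (0 : ℝ), ∀ (G : Type) [AddCommGroup G] [Fintype G] (A : Set G), α ≤ density A →
      c ≤ density {p : G × G | ∀ j < q, p.1 + j • p.2 ∈ A} := by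
  have hq : DensityHalesJewett (Fin q) := by
    obtain ⟨n, rfl⟩ := Nat.exists_eq_succ_of_ne_zero (NeZero.ne q)
    exact densityHalesJewett_fin_succ n
  obtain ⟨n, c, hc, h⟩ := hq.exists_common_line hα
  refine ⟨c, hc, fun G _ _ A hA => ?_⟩
  obtain ⟨l, hl⟩ := h (G × (Fin n → G)) (cubePreimage A) (by rwa [expect_density_cubePreimage])
  rw [density, ← expect_comp_addMonoidHom _ (lineProgression_surjective l)]
  refine hl.trans (density_mono fun p hp j hj => ?_)
  rw [← add_sum_line_nsmul l p ⟨j, hj⟩]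
  exact hp ⟨j, hj⟩

end FiniteAbelianGroup

section QuadraticForm

variable {X : Type*} [Fintype X] {T : Matrix X X ℝ}

lemma dotProduct_mul_self_mulVec (hT : T.IsSymm) (v : X → ℝ) :
    v ⬝ᵥ (T * T) *ᵥ v = (T *ᵥ v) ⬝ᵥ (T *ᵥ v) := by
  rw [← mulVec_mulVec, dotProduct_mulVec, ← mulVec_transpose, hT.eq]

lemma trace_mul_self (hT : T.IsSymm) : (T * T).trace = ∑ x, T x ⬝ᵥ T x := by
  simp only [trace, diag_apply, mul_apply, dotProduct, hT.apply]

lemma trace_mul_self_nonneg (hT : T.IsSymm) : 0 ≤ (T * T).trace := by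
  rw [trace_mul_self hT]
  exact sum_nonneg fun _ _ => sum_nonneg fun _ _ => mul_self_nonneg _

lemma dotProduct_sq_le (v w : X → ℝ) : (v ⬝ᵥ w) ^ 2 ≤ (v ⬝ᵥ v) * (w ⬝ᵥ w) := by
  simpa only [dotProduct, ← sq] using sum_mul_sq_le_sq_mul_sq univ v w

lemma dotProduct_mulVec_sq_le (hT : T.IsSymm) (v : X → ℝ) :
    (v ⬝ᵥ T *ᵥ v) ^ 2 ≤ (v ⬝ᵥ v) * (v ⬝ᵥ (T * T) *ᵥ v) := by
  rw [dotProduct_mul_self_mulVec hT]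
  exact dotProduct_sq_le v _

lemma dotProduct_mul_self_mulVec_le (hT : T.IsSymm) (v : X → ℝ) :
    v ⬝ᵥ (T * T) *ᵥ v ≤ (v ⬝ᵥ v) * (T * T).trace := by
  rw [dotProduct_mul_self_mulVec hT, trace_mul_self hT, mul_sum]
  refine sum_le_sum fun x _ => ?_
  rw [← sq, mul_comm]
  exact dotProduct_sq_le (T x) v

lemma dotProduct_mulVec_pow_le [DecidableEq X] (v : X → ℝ) (j : ℕ) (hT : T.IsSymm) :
    (v ⬝ᵥ T *ᵥ v) ^ 2 ^ (j + 1) ≤ (v ⬝ᵥ v) ^ 2 ^ (j + 1) * (T ^ 2 ^ (j + 1)).trace := by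
  have hv : 0 ≤ v ⬝ᵥ v := dotProduct_self_star_nonneg v
  induction j generalizing T with
  | zero =>
    calc (v ⬝ᵥ T *ᵥ v) ^ 2 ≤ (v ⬝ᵥ v) * (v ⬝ᵥ (T * T) *ᵥ v) := dotProduct_mulVec_sq_le hT v
      _ ≤ (v ⬝ᵥ v) * ((v ⬝ᵥ v) * (T * T).trace) := by
        gcongr
        exact dotProduct_mul_self_mulVec_le hT v
      _ = (v ⬝ᵥ v) ^ 2 * (T ^ 2).trace := by rw [sq, sq, mul_assoc]
  | succ j ih =>
    have hTT : (T * T).IsSymm := by rw [IsSymm, transpose_mul, hT.eq]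
    calc (v ⬝ᵥ T *ᵥ v) ^ 2 ^ (j + 2) = ((v ⬝ᵥ T *ᵥ v) ^ 2) ^ 2 ^ (j + 1) := by
          rw [← pow_mul, ← pow_succ']
      _ ≤ ((v ⬝ᵥ v) * (v ⬝ᵥ (T * T) *ᵥ v)) ^ 2 ^ (j + 1) := by
          gcongr
          exact dotProduct_mulVec_sq_le hT v
      _ ≤ (v ⬝ᵥ v) ^ 2 ^ (j + 1) * ((v ⬝ᵥ v) ^ 2 ^ (j + 1) * ((T * T) ^ 2 ^ (j + 1)).trace) := by
          rw [mul_pow]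
          gcongr
          exact ih hTT
      _ = (v ⬝ᵥ v) ^ 2 ^ (j + 2) * (T ^ 2 ^ (j + 2)).trace := by
          rw [← mul_assoc, ← pow_add, ← two_mul, ← pow_succ', ← sq T, ← pow_mul, ← pow_succ']

end QuadraticForm

section Rademacher

variable {ι : Type*} [Fintype ι] [DecidableEq ι]

section SignSum

variable {A : Type*} [Ring A]

/-- The sum over all sign patterns `ε` of `(∏ i, ε i ^ a i) (∑ i, ε i T i) ^ n`: up to
normalization, a mixed moment of a Rademacher series with coefficients in a ring. -/
def signSum (T : ι → A) (a : ι → ℕ) (n : ℕ) : A :=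
  ∑ ε : ι → ℤˣ, (∏ i, ε i ^ a i) • (∑ i, ε i • T i) ^ n

lemma prod_units_pow_add_single (a : ι → ℕ) (i : ι) (ε : ι → ℤˣ) :
    ∏ k, ε k ^ (a + Pi.single i 1 : ι → ℕ) k = (∏ k, ε k ^ a k) * ε i := by
  simp only [Pi.add_apply, pow_add, prod_mul_distrib]
  congr 1
  exact (Fintype.prod_eq_single i fun k hk => by simp [hk]).trans (by simp)

lemma signSum_zero (T : ι → A) (a : ι → ℕ) :
    signSum T a 0 = ((∏ i, ∑ s : ℤˣ, (s : ℤ) ^ a i : ℤ) : A) := by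
  simp only [signSum, pow_zero, Units.smul_def, zsmul_one, ← Int.cast_sum, prod_univ_sum,
    Fintype.piFinset_univ, Units.coe_prod, Units.val_pow_eq_pow_val]

lemma signSum_succ (T : ι → A) (a : ι → ℕ) (n : ℕ) :
    signSum T a (n + 1) = ∑ i, T i * signSum T (a + Pi.single i 1) n := by
  simp only [signSum, mul_sum]
  rw [sum_comm]
  refine sum_congr rfl fun ε _ => ?_
  rw [pow_succ', sum_mul, smul_sum]
  refine sum_congr rfl fun i _ => ?_
  rw [prod_units_pow_add_single, mul_smul_comm, mul_smul, smul_mul_assoc]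

lemma sum_units_int_pow_nonneg (n : ℕ) : 0 ≤ ∑ s : ℤˣ, (s : ℤ) ^ n := by
  rcases neg_one_pow_eq_or ℤ n with h | h <;> simp [h]

end SignSum

lemma sum_abs_signSum_le {X : Type*} [Fintype X] [DecidableEq X]
    {T : ι → Matrix X X ℝ} {ρ : ℝ} (hT : ∀ i x, ∑ y, |T i x y| ≤ ρ) (a : ι → ℕ) (n : ℕ) (x : X) :
    ∑ y, |signSum T a n x y| ≤ ρ ^ n * signSum (1 : ι → ℝ) a n := by
  induction n generalizing a x with
  | zero =>
    have nonneg : 0 ≤ ∏ i, ∑ s : ℤˣ, (s : ℤ) ^ a i :=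
      prod_nonneg fun i _ => sum_units_int_pow_nonneg _
    simp only [signSum_zero, pow_zero, one_mul]
    rw [Fintype.sum_eq_single x fun y hy => by simp [Matrix.intCast_apply, hy.symm]]
    rw [Matrix.intCast_apply, if_pos rfl, abs_of_nonneg (Int.cast_nonneg nonneg)]
  | succ n ih =>
    have nonneg (i : ι) : 0 ≤ ρ ^ n * signSum (1 : ι → ℝ) (a + Pi.single i 1) n :=
      (sum_nonneg fun _ _ => abs_nonneg _).trans (ih (a + Pi.single i 1) x)
    calc ∑ y, |signSum T a (n + 1) x y|
        ≤ ∑ y, ∑ i, ∑ z, |T i x z| * |signSum T (a + Pi.single i 1) n z y| := by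
          refine sum_le_sum fun y _ => ?_
          rw [signSum_succ, Matrix.sum_apply]
          refine (abs_sum_le_sum_abs _ _).trans (sum_le_sum fun i _ => ?_)
          simp only [mul_apply, ← abs_mul]
          exact abs_sum_le_sum_abs _ _
      _ = ∑ i, ∑ z, |T i x z| * ∑ y, |signSum T (a + Pi.single i 1) n z y| := by
          simp only [mul_sum]
          rw [sum_comm]
          exact sum_congr rfl fun i _ => sum_comm
      _ ≤ ∑ i, ∑ z, |T i x z| * (ρ ^ n * signSum (1 : ι → ℝ) (a + Pi.single i 1) n) := by
          gcongr
          exact ih _ _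
      _ ≤ ∑ i, ρ * (ρ ^ n * signSum (1 : ι → ℝ) (a + Pi.single i 1) n) := by
          refine sum_le_sum fun i _ => ?_
          rw [← sum_mul]
          exact mul_le_mul_of_nonneg_right (hT i x) (nonneg i)
      _ = ρ ^ (n + 1) * signSum (1 : ι → ℝ) a (n + 1) := by
          simp only [signSum_succ, Pi.one_apply, one_mul, mul_sum, pow_succ', mul_assoc]

lemma expect_exp_mul_sum_units_le (l : ℝ) :
    𝔼 ε : ι → ℤˣ, Real.exp (l * ∑ i, ((ε i : ℤ) : ℝ)) ≤
      Real.exp (l ^ 2 * Fintype.card ι / 2) := by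
  calc 𝔼 ε : ι → ℤˣ, Real.exp (l * ∑ i, ((ε i : ℤ) : ℝ))
      = 𝔼 ε : ι → ℤˣ, ∏ i, Real.exp (l * ((ε i : ℤ) : ℝ)) :=
        expect_congr rfl fun ε _ => by rw [mul_sum, Real.exp_sum]
    _ = Real.cosh l ^ Fintype.card ι := by
        have sum_exp : ∑ s : ℤˣ, Real.exp (l * ((s : ℤ) : ℝ)) = 2 * Real.cosh l := by
          rw [UnitsInt.univ, sum_pair (by decide), Real.cosh_eq]
          simp [mul_div_cancel₀]
        have := prod_univ_sum (fun _ : ι => univ) fun _ (s : ℤˣ) => Real.exp (l * ((s : ℤ) : ℝ))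
        rw [Fintype.piFinset_univ] at this
        rw [Fintype.expect_eq_sum_div_card, ← this]
        simp only [sum_exp, prod_const, card_univ, mul_pow]
        simp
    _ ≤ Real.exp (l ^ 2 / 2) ^ Fintype.card ι := by
        gcongr
        exact Real.cosh_le_exp_half_sq l
    _ = Real.exp (l ^ 2 * Fintype.card ι / 2) := by
        rw [← Real.exp_nat_mul]
        ring_nf

lemma pow_le_mul_exp_add_exp (n : ℕ) (x : ℝ) :
    |x| ^ n ≤ (n : ℝ) ^ n * (Real.exp x + Real.exp (-x)) := by
  have taylor := Real.pow_div_factorial_le_exp |x| (abs_nonneg _) n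
  rw [div_le_iff₀' (by positivity)] at taylor
  calc |x| ^ n ≤ n.factorial * Real.exp |x| := taylor
    _ ≤ (n : ℝ) ^ n * (Real.exp x + Real.exp (-x)) := by
      gcongr
      · exact_mod_cast Nat.factorial_le_pow n
      · rcases abs_choice x with h | h <;> rw [h] <;> simp [Real.exp_nonneg]

lemma expect_sum_units_pow_le [Nonempty ι] {p : ℕ} (hp : 0 < p) :
    𝔼 ε : ι → ℤˣ, (∑ i, ((ε i : ℤ) : ℝ)) ^ (2 * p) ≤
      2 * (2 * p * Real.exp 1 * Fintype.card ι) ^ p := by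
  set m : ℝ := (Fintype.card ι : ℝ)
  have hm : 0 < m := by positivity
  set l := √(2 * p / m)
  have hl : l ^ 2 = 2 * p / m := Real.sq_sqrt (by positivity)
  have hexp : l ^ 2 * m / 2 = p := by rw [hl]; field_simp
  have scaled : (2 * p / m) ^ p * 𝔼 ε : ι → ℤˣ, (∑ i, ((ε i : ℤ) : ℝ)) ^ (2 * p) ≤
      (2 * p : ℝ) ^ (2 * p) * (Real.exp p + Real.exp p) :=
    calc (2 * p / m) ^ p * 𝔼 ε : ι → ℤˣ, (∑ i, ((ε i : ℤ) : ℝ)) ^ (2 * p)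
        = 𝔼 ε : ι → ℤˣ, |l * ∑ i, ((ε i : ℤ) : ℝ)| ^ (2 * p) := by
          rw [mul_expect]
          refine expect_congr rfl fun ε _ => ?_
          rw [(even_two_mul p).pow_abs, mul_pow, pow_mul l, hl]
      _ ≤ 𝔼 ε : ι → ℤˣ, ((2 * p : ℕ) : ℝ) ^ (2 * p) *
            (Real.exp (l * ∑ i, ((ε i : ℤ) : ℝ)) + Real.exp (-l * ∑ i, ((ε i : ℤ) : ℝ))) := by
          refine expect_le_expect fun ε _ => ?_
          rw [neg_mul]
          exact pow_le_mul_exp_add_exp _ _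
      _ ≤ (2 * p : ℝ) ^ (2 * p) * (Real.exp p + Real.exp p) := by
          rw [← mul_expect, expect_add_distrib, Nat.cast_mul, Nat.cast_ofNat]
          have pos := expect_exp_mul_sum_units_le (ι := ι) l
          have neg := expect_exp_mul_sum_units_le (ι := ι) (-l)
          rw [neg_sq, hexp] at neg
          rw [hexp] at pos
          gcongr
  have balance : (2 * p : ℝ) ^ (2 * p) * (Real.exp p + Real.exp p) =
      (2 * p / m) ^ p * (2 * (2 * p * Real.exp 1 * m) ^ p) := by
    rw [← Real.exp_one_pow p, mul_left_comm, ← mul_pow, pow_mul, ← two_mul, mul_left_comm,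
      ← mul_pow]
    congr 2
    field_simp
  rw [balance] at scaled
  exact le_of_mul_le_mul_left scaled (by positivity)

lemma expect_trace_pow_le [Nonempty ι] {X : Type*} [Fintype X] [DecidableEq X]
    {T : ι → Matrix X X ℝ} {ρ : ℝ} (hρ : 0 ≤ ρ) (hT : ∀ i x, ∑ y, |T i x y| ≤ ρ) {p : ℕ}
    (hp : 0 < p) :
    𝔼 ε : ι → ℤˣ, ((∑ i, ε i • T i) ^ (2 * p)).trace ≤
      Fintype.card X * (ρ ^ (2 * p) * (2 * (2 * p * Real.exp 1 * Fintype.card ι) ^ p)) := by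
  have matrix_mean : 𝔼 ε : ι → ℤˣ, ((∑ i, ε i • T i) ^ (2 * p)).trace =
      (signSum T 0 (2 * p)).trace / Fintype.card (ι → ℤˣ) := by
    simp [signSum, Fintype.expect_eq_sum_div_card, trace_sum]
  have scalar_mean : 𝔼 ε : ι → ℤˣ, (∑ i, ((ε i : ℤ) : ℝ)) ^ (2 * p) =
      signSum (1 : ι → ℝ) 0 (2 * p) / Fintype.card (ι → ℤˣ) := by
    simp [signSum, Fintype.expect_eq_sum_div_card, Units.smul_def]
  have diagonal (x : X) : signSum T 0 (2 * p) x x ≤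
      ρ ^ (2 * p) * signSum (1 : ι → ℝ) 0 (2 * p) :=
    calc signSum T 0 (2 * p) x x ≤ |signSum T 0 (2 * p) x x| := le_abs_self _
      _ ≤ ∑ y, |signSum T 0 (2 * p) x y| :=
        single_le_sum (f := fun y => |signSum T 0 (2 * p) x y|) (fun _ _ => abs_nonneg _)
          (mem_univ x)
      _ ≤ _ := sum_abs_signSum_le hT 0 _ x
  calc 𝔼 ε : ι → ℤˣ, ((∑ i, ε i • T i) ^ (2 * p)).trace
      ≤ Fintype.card X * (ρ ^ (2 * p) * signSum (1 : ι → ℝ) 0 (2 * p)) /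
          Fintype.card (ι → ℤˣ) := by
        rw [matrix_mean, ← nsmul_eq_mul, ← card_univ]
        gcongr
        exact sum_le_card_nsmul _ _ _ fun x _ => diagonal x
    _ = Fintype.card X * (ρ ^ (2 * p) * 𝔼 ε : ι → ℤˣ, (∑ i, ((ε i : ℤ) : ℝ)) ^ (2 * p)) := by
        rw [scalar_mean]
        ring
    _ ≤ _ := by
        gcongr
        exact expect_sum_units_pow_le hp

end Rademacher

section QuadraticSamples

variable {ι G : Type*} [Fintype ι] [DecidableEq ι] [Fintype G]

lemma expect_eval [Nonempty G] (i : ι) (F : G → ℝ) : 𝔼 u : ι → G, F (u i) = 𝔼 g, F g := by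
  calc 𝔼 u : ι → G, F (u i) = 𝔼 p : G × ({j // j ≠ i} → G), F p.1 :=
        Fintype.expect_equiv (Equiv.funSplitAt i G) _ _ fun u => rfl
    _ = 𝔼 g, F g := by
        rw [← univ_product_univ, expect_product]
        exact expect_congr rfl fun g _ => Fintype.expect_const (F g)

lemma pow_expect_le_expect_pow {Ω : Type*} [Fintype Ω] [Nonempty Ω] (f : Ω → ℝ) {n : ℕ}
    (hn : Even n) : (𝔼 x, f x) ^ n ≤ 𝔼 x, f x ^ n := by
  have jensen := Real.pow_arith_mean_le_arith_mean_pow_of_even univ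
    (fun _ : Ω => (Fintype.card Ω : ℝ)⁻¹) f (fun _ _ => by positivity) (by simp) hn
  simpa only [Fintype.expect_eq_sum_div_card, div_eq_inv_mul, mul_sum] using jensen

lemma expect_expect_sub_eq_expect_units_smul {E : Type*} [AddCommGroup E] (f : G → E)
    (F : E → ℝ) :
    𝔼 u : ι → G, 𝔼 u' : ι → G, F (∑ i, (f (u' i) - f (u i))) =
      𝔼 w : ι → G × G, 𝔼 ε : ι → ℤˣ, F (∑ i, ε i • (f (w i).2 - f (w i).1)) := by
  have swap (ε : ι → ℤˣ) : 𝔼 w : ι → G × G, F (∑ i, (f (w i).2 - f (w i).1)) =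
      𝔼 w : ι → G × G, F (∑ i, ε i • (f (w i).2 - f (w i).1)) := by
    refine (Fintype.expect_equiv (Equiv.piCongrRight
      fun i => if ε i = 1 then Equiv.refl (G × G) else Equiv.prodComm G G) _ _ fun w => ?_).symm
    congr 1
    refine sum_congr rfl fun i _ => ?_
    rcases Int.units_eq_one_or (ε i) with h | h <;> simp [h, Units.smul_def]
  calc 𝔼 u : ι → G, 𝔼 u' : ι → G, F (∑ i, (f (u' i) - f (u i)))
      = 𝔼 w : ι → G × G, F (∑ i, (f (w i).2 - f (w i).1)) := by
        rw [← expect_product', univ_product_univ]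
        exact (Fintype.expect_equiv (Equiv.arrowProdEquivProdArrow ι _ _) _ _ fun w => rfl).symm
    _ = 𝔼 _ε : ι → ℤˣ, 𝔼 w : ι → G × G, F (∑ i, (f (w i).2 - f (w i).1)) :=
        (Fintype.expect_const _).symm
    _ = 𝔼 ε : ι → ℤˣ, 𝔼 w : ι → G × G, F (∑ i, ε i • (f (w i).2 - f (w i).1)) :=
        expect_congr rfl fun ε _ => swap ε
    _ = _ := expect_comm ..

variable {X : Type*} [Fintype X]

/-- The samples `u` for which the quadratic forms `M (u i)` all vanish at a common vector at which
the average of the forms `M g` is at least `c` times the square of the norm. -/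
def nullSamples (ι : Type*) (M : G → Matrix X X ℝ) (c : ℝ) : Set (ι → G) :=
  {u | ∃ v : X → ℝ, 0 < v ⬝ᵥ v ∧ (∀ i, v ⬝ᵥ M (u i) *ᵥ v = 0) ∧
    c * (v ⬝ᵥ v) ≤ 𝔼 g, v ⬝ᵥ M g *ᵥ v}

variable {M : G → Matrix X X ℝ} {c : ℝ}

/- The second sample `u'` is a ghost: at the vector witnessing that `u` is null, the form of
`∑ i, (M (u' i) - M (u i))` is on average `|ι|` times the average form. -/
lemma pow_le_expect_trace_of_mem_nullSamples [DecidableEq X] [Nonempty G]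
    (hM : ∀ g, (M g).IsSymm) (hc : 0 ≤ c) (j : ℕ) {u : ι → G} (hu : u ∈ nullSamples ι M c) :
    (Fintype.card ι * c) ^ 2 ^ (j + 1) ≤
      𝔼 u' : ι → G, ((∑ i, (M (u' i) - M (u i))) ^ 2 ^ (j + 1)).trace := by
  obtain ⟨v, hv, hzero, hmean⟩ := hu
  set S : (ι → G) → Matrix X X ℝ := fun u' => ∑ i, (M (u' i) - M (u i))
  have hS (u' : ι → G) : (S u').IsSymm := by
    simp only [S, IsSymm, transpose_sum, transpose_sub, (hM _).eq]
  have form (u' : ι → G) : v ⬝ᵥ S u' *ᵥ v = ∑ i, v ⬝ᵥ M (u' i) *ᵥ v := by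
    simp only [S, sum_mulVec, sub_mulVec, dotProduct_sum, dotProduct_sub, hzero, sub_zero]
  have mean : 𝔼 u', v ⬝ᵥ S u' *ᵥ v = Fintype.card ι * 𝔼 g, v ⬝ᵥ M g *ᵥ v := by
    simp only [form, expect_sum_comm, expect_eval _ fun g => v ⬝ᵥ M g *ᵥ v, sum_const, card_univ,
      nsmul_eq_mul]
  refine le_of_mul_le_mul_left ?_ (pow_pos hv (2 ^ (j + 1)))
  calc (v ⬝ᵥ v) ^ 2 ^ (j + 1) * (Fintype.card ι * c) ^ 2 ^ (j + 1)
      = (Fintype.card ι * (c * (v ⬝ᵥ v))) ^ 2 ^ (j + 1) := by ring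
    _ ≤ (𝔼 u', v ⬝ᵥ S u' *ᵥ v) ^ 2 ^ (j + 1) := by
      rw [mean]
      gcongr
    _ ≤ 𝔼 u', (v ⬝ᵥ S u' *ᵥ v) ^ 2 ^ (j + 1) :=
      pow_expect_le_expect_pow _ (Nat.even_pow.2 ⟨even_two, j.succ_ne_zero⟩)
    _ ≤ (v ⬝ᵥ v) ^ 2 ^ (j + 1) * 𝔼 u', (S u' ^ 2 ^ (j + 1)).trace := by
      rw [mul_expect]
      exact expect_le_expect fun u' _ => dotProduct_mulVec_pow_le v j (hS u')

lemma pow_mul_density_nullSamples_le [DecidableEq X] [Nonempty G] (hM : ∀ g, (M g).IsSymm)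
    (hc : 0 ≤ c) (j : ℕ) :
    (Fintype.card ι * c) ^ 2 ^ (j + 1) * density (nullSamples ι M c) ≤
      𝔼 u : ι → G, 𝔼 u' : ι → G, ((∑ i, (M (u' i) - M (u i))) ^ 2 ^ (j + 1)).trace := by
  rw [density, mul_expect]
  refine expect_le_expect fun u _ => ?_
  by_cases hu : u ∈ nullSamples ι M c
  · simpa [hu] using pow_le_expect_trace_of_mem_nullSamples hM hc j hu
  · rw [Set.indicator_of_notMem hu, mul_zero]
    refine expect_nonneg fun u' _ => ?_
    rw [pow_succ 2 j, mul_two, pow_add]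
    refine trace_mul_self_nonneg (IsSymm.pow ?_ _)
    simp only [IsSymm, transpose_sum, transpose_sub, (hM _).eq]

theorem density_nullSamples_le [Nonempty ι] [Nonempty G] (hM : ∀ g, (M g).IsSymm) {r : ℝ}
    (hr : 0 ≤ r) (hMr : ∀ g x, ∑ y, |M g x y| ≤ r) (hc : 0 < c) (j : ℕ) :
    density (nullSamples ι M c) ≤ 2 * Fintype.card X *
      ((2 * r) ^ 2 * (2 * 2 ^ j * Real.exp 1) / (c ^ 2 * Fintype.card ι)) ^ 2 ^ j := by
  classical
  have row (w : ι → G × G) (i : ι) (x : X) : ∑ y, |(M (w i).2 - M (w i).1) x y| ≤ 2 * r :=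
    calc ∑ y, |(M (w i).2 - M (w i).1) x y|
        ≤ ∑ y, (|M (w i).2 x y| + |M (w i).1 x y|) := sum_le_sum fun y _ => abs_sub _ _
      _ ≤ 2 * r := by
        rw [sum_add_distrib, two_mul]
        exact add_le_add (hMr _ _) (hMr _ _)
  have trace_bound := pow_mul_density_nullSamples_le (ι := ι) hM hc.le j
  rw [expect_expect_sub_eq_expect_units_smul M fun S => (S ^ 2 ^ (j + 1)).trace, pow_succ' 2 j]
    at trace_bound
  have bound := trace_bound.trans <| expect_le univ_nonempty fun w _ =>
    expect_trace_pow_le (by positivity) (row w) (pow_pos two_pos j)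
  rw [← le_div_iff₀' (by positivity)] at bound
  have rescale : (2 * r) ^ 2 * (2 * 2 ^ j * Real.exp 1) / (c ^ 2 * Fintype.card ι) =
      (2 * r) ^ 2 * (2 * 2 ^ j * Real.exp 1 * Fintype.card ι) / (Fintype.card ι * c) ^ 2 := by
    field_simp
  refine bound.trans_eq ?_
  rw [rescale, div_pow, mul_pow ((2 * r) ^ 2), pow_mul, pow_mul, Nat.cast_pow, Nat.cast_ofNat]
  ring

end QuadraticSamples

section Truncation

variable {X : Type*} [Fintype X] {W : Matrix X X ℝ} {R : ℝ}

/-- The matrix obtained from `W` by deleting the rows and columns whose sum exceeds `R`. -/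
noncomputable def truncate (R : ℝ) (W : Matrix X X ℝ) : Matrix X X ℝ :=
  Matrix.of fun x y => if ∑ z, W x z ≤ R ∧ ∑ z, W z y ≤ R then W x y else 0

theorem truncate_nonneg (hW : ∀ x y, 0 ≤ W x y) (x y : X) : 0 ≤ truncate R W x y := by
  simp only [truncate, of_apply]
  split_ifs
  exacts [hW x y, le_rfl]

theorem truncate_le (hW : ∀ x y, 0 ≤ W x y) (x y : X) : truncate R W x y ≤ W x y := by
  simp only [truncate, of_apply]
  split_ifs
  exacts [le_rfl, hW x y]

theorem truncate_transpose : (truncate R W)ᵀ = truncate R Wᵀ := by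
  ext x y
  simp only [truncate, transpose_apply, of_apply, and_comm]

theorem sum_truncate_le (hW : ∀ x y, 0 ≤ W x y) (hR : 0 ≤ R) (x : X) :
    ∑ y, truncate R W x y ≤ R := by
  by_cases hx : ∑ z, W x z ≤ R
  · exact (sum_le_sum fun y _ => truncate_le hW x y).trans hx
  · simpa [truncate, hx] using hR

-- A deleted entry lies in a row or a column whose sum, divided by `R`, is at least one.
theorem le_truncate_add (hW : ∀ x y, 0 ≤ W x y) (hR : 0 < R) (x y : X) :
    W x y ≤ truncate R W x y + (∑ z, W x z) / R * W x y + (∑ z, W z y) / R * W x y := by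
  have hrow : 0 ≤ (∑ z, W x z) / R := div_nonneg (sum_nonneg fun z _ => hW x z) hR.le
  have hcol : 0 ≤ (∑ z, W z y) / R := div_nonneg (sum_nonneg fun z _ => hW z y) hR.le
  have htrunc := truncate_nonneg (R := R) hW x y
  by_cases hxy : ∑ z, W x z ≤ R ∧ ∑ z, W z y ≤ R
  · have : truncate R W x y = W x y := if_pos hxy
    nlinarith [mul_nonneg hrow (hW x y), mul_nonneg hcol (hW x y)]
  · have : 1 ≤ (∑ z, W x z) / R + (∑ z, W z y) / R := by
      rw [not_and_or, not_le, not_le, ← one_lt_div hR, ← one_lt_div hR] at hxy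
      rcases hxy with h | h <;> linarith
    nlinarith [mul_le_mul_of_nonneg_right this (hW x y)]

theorem sum_sum_le_truncate_add (hW : ∀ x y, 0 ≤ W x y) (hR : 0 < R) (s : Finset X) :
    ∑ x ∈ s, ∑ y ∈ s, W x y ≤ ∑ x ∈ s, ∑ y ∈ s, truncate R W x y +
      (∑ x ∈ s, (∑ z, W x z) ^ 2) / R + (∑ y ∈ s, (∑ z, W z y) ^ 2) / R := by
  have hrow : ∀ x, ∑ y ∈ s, (∑ z, W x z) / R * W x y ≤ (∑ z, W x z) ^ 2 / R := fun x => by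
    rw [← mul_sum, sq, mul_div_right_comm]
    exact mul_le_mul_of_nonneg_left (sum_le_univ_sum_of_nonneg (hW x))
      (div_nonneg (sum_nonneg fun z _ => hW x z) hR.le)
  have hcol : ∀ y, ∑ x ∈ s, (∑ z, W z y) / R * W x y ≤ (∑ z, W z y) ^ 2 / R := fun y => by
    rw [← mul_sum, sq, mul_div_right_comm]
    exact mul_le_mul_of_nonneg_left (sum_le_univ_sum_of_nonneg (hW · y))
      (div_nonneg (sum_nonneg fun z _ => hW z y) hR.le)
  calc ∑ x ∈ s, ∑ y ∈ s, W x y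
      ≤ ∑ x ∈ s, ∑ y ∈ s, (truncate R W x y + (∑ z, W x z) / R * W x y
          + (∑ z, W z y) / R * W x y) :=
        sum_le_sum fun x _ => sum_le_sum fun y _ => le_truncate_add hW hR x y
    _ = ∑ x ∈ s, ∑ y ∈ s, truncate R W x y + ∑ x ∈ s, ∑ y ∈ s, (∑ z, W x z) / R * W x y
          + ∑ y ∈ s, ∑ x ∈ s, (∑ z, W z y) / R * W x y := by
        rw [sum_comm (f := fun y x => (∑ z, W z y) / R * W x y)]
        simp only [sum_add_distrib]
    _ ≤ _ := by
        rw [sum_div, sum_div]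
        gcongr with x _ y _
        exacts [hrow x, hcol y]

/-- A symmetric matrix with row sums at most `2 * R` which approximates `W + Wᵀ`. -/
noncomputable def symmTruncate (R : ℝ) (W : Matrix X X ℝ) : Matrix X X ℝ :=
  truncate R W + (truncate R W)ᵀ

theorem symmTruncate_isSymm : (symmTruncate R W).IsSymm := by
  rw [IsSymm, symmTruncate, transpose_add, transpose_transpose, add_comm]

theorem sum_abs_symmTruncate_le (hW : ∀ x y, 0 ≤ W x y) (hR : 0 ≤ R) (x : X) :
    ∑ y, |symmTruncate R W x y| ≤ 2 * R := by
  have habs : ∀ y, |symmTruncate R W x y| = truncate R W x y + truncate R Wᵀ x y := fun y => by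
    rw [symmTruncate, truncate_transpose, Matrix.add_apply, abs_of_nonneg]
    exact add_nonneg (truncate_nonneg hW x y) (truncate_nonneg (fun x y => hW y x) x y)
  simp only [habs, sum_add_distrib, two_mul]
  exact add_le_add (sum_truncate_le hW hR x) (sum_truncate_le (fun x y => hW y x) hR x)

theorem sum_sum_symmTruncate (s : Finset X) :
    ∑ x ∈ s, ∑ y ∈ s, symmTruncate R W x y = 2 * ∑ x ∈ s, ∑ y ∈ s, truncate R W x y := by
  simp only [symmTruncate, Matrix.add_apply, transpose_apply, sum_add_distrib, two_mul]
  rw [sum_comm (f := fun x y => truncate R W y x)]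

theorem indicator_one_dotProduct_mulVec (s : Finset X) (T : Matrix X X ℝ) :
    (s : Set X).indicator 1 ⬝ᵥ T *ᵥ (s : Set X).indicator 1 = ∑ x ∈ s, ∑ y ∈ s, T x y := by
  classical
  simp [dotProduct, mulVec, Set.indicator_apply]

theorem indicator_one_dotProduct_self (s : Finset X) :
    (s : Set X).indicator (1 : X → ℝ) ⬝ᵥ (s : Set X).indicator 1 = #s := by
  classical
  simp [dotProduct, Set.indicator_apply]

end Truncation

section Words

variable {ι : Type*} [Fintype ι] [DecidableEq ι]

theorem expect_piFinset_prod {E : ι → Type*} {s : ∀ i, Finset (E i)} (hs : ∀ i, (s i).Nonempty)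
    (S : Finset ι) (g : ∀ i, E i → ℝ) :
    𝔼 x ∈ Fintype.piFinset s, ∏ i ∈ S, g i (x i) = ∏ i ∈ S, 𝔼 e ∈ s i, g i e := by
  have hS : ∀ x : ∀ i, E i, ∏ i ∈ S, g i (x i) = ∏ i, (if i ∈ S then g i (x i) else 1) :=
    fun x => (Fintype.prod_ite_mem S _).symm
  simp only [hS, expect_eq_sum_div_card]
  rw [← prod_univ_sum s fun i e => if i ∈ S then g i e else 1, Fintype.card_piFinset,
    Nat.cast_prod, ← prod_div_distrib, ← Fintype.prod_ite_mem S]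
  refine prod_congr rfl fun i _ => ?_
  split_ifs
  · rfl
  · simp [(hs i).card_ne_zero]

variable {τ G : Type*} [Fintype τ] {A : Finset G}

/-- The words in the alphabet `A` with letters indexed by `τ`. -/
def words (τ : Type*) [Fintype τ] [DecidableEq τ] (A : Finset G) : Finset (τ → G) :=
  Fintype.piFinset fun _ => A

theorem words_nonempty [DecidableEq τ] (hA : A.Nonempty) : (words τ A).Nonempty :=
  Fintype.piFinset_nonempty.2 fun _ => hA

theorem update_mem_words [DecidableEq τ] {ξ : τ → G} {b' : G} (hξ : ξ ∈ words τ A) (l : τ) :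
    Function.update ξ l b' ∈ words τ A ↔ b' ∈ A := by
  simp only [words, Fintype.mem_piFinset] at hξ ⊢
  refine ⟨fun h => by simpa using h l, fun hb i => ?_⟩
  rcases eq_or_ne i l with rfl | hi
  · simpa using hb
  · simpa [hi] using hξ i

/-- The `ι`-tuples of words in the alphabet `A`. -/
def wordTuples (ι τ : Type*) [Fintype ι] [DecidableEq ι] [Fintype τ] [DecidableEq τ]
    (A : Finset G) : Finset (ι → τ → G) :=
  Fintype.piFinset fun _ => words τ A

theorem wordTuples_nonempty [DecidableEq τ] (hA : A.Nonempty) : (wordTuples ι τ A).Nonempty :=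
  Fintype.piFinset_nonempty.2 fun _ => words_nonempty hA

theorem expect_wordTuples_prod [DecidableEq τ] (hA : A.Nonempty) (g : ι → (τ → G) → ℝ) :
    𝔼 x ∈ wordTuples ι τ A, ∏ j, g j (x j) = ∏ j, 𝔼 ξ ∈ words τ A, g j ξ :=
  expect_piFinset_prod (fun _ => words_nonempty hA) univ g

variable [DecidableEq G]

/-- The number of occurrences of the letter `b` in the word `ξ`. -/
noncomputable def occurrences (b : G) (ξ : τ → G) : ℝ := ∑ l, if ξ l = b then 1 else 0

theorem occurrences_nonneg (b : G) (ξ : τ → G) : 0 ≤ occurrences b ξ :=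
  sum_nonneg fun _ _ => by split_ifs <;> norm_num

variable [DecidableEq τ]

theorem expect_words_eq (hA : A.Nonempty) (l : τ) (b : G) :
    𝔼 ξ ∈ words τ A, (if ξ l = b then 1 else 0 : ℝ) = (if b ∈ A then 1 else 0) / #A := by
  have := expect_piFinset_prod (fun _ : τ => hA) {l} fun _ e => if e = b then (1 : ℝ) else 0
  simp only [prod_singleton] at this
  rw [words, this, expect_eq_sum_div_card, sum_ite_eq']

theorem expect_words_eq_mul_eq_le (hA : A.Nonempty) {l l' : τ} (hl : l ≠ l') (b b' : G) :
    𝔼 ξ ∈ words τ A, ((if ξ l = b then 1 else 0) * (if ξ l' = b' then 1 else 0) : ℝ) ≤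
      (1 / #A) ^ 2 := by
  have := expect_piFinset_prod (fun _ : τ => hA) {l, l'}
    fun i e => if e = (if i = l then b else b') then (1 : ℝ) else 0
  simp only [prod_pair hl, if_true, if_neg hl.symm, expect_eq_sum_div_card _ (fun _ => ite _ _ _),
    sum_ite_eq'] at this
  rw [words, this, sq]
  gcongr <;> split_ifs <;> norm_num

theorem expect_occurrences (hA : A.Nonempty) (b : G) :
    𝔼 ξ ∈ words τ A, occurrences b ξ =
      (if b ∈ A then 1 else 0) * (Fintype.card τ / #A) := by
  simp only [occurrences, expect_sum_comm, expect_words_eq hA, sum_const, card_univ, nsmul_eq_mul]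
  ring

theorem expect_occurrences_mul_le (hA : A.Nonempty) (b b' : G) :
    𝔼 ξ ∈ words τ A, occurrences b ξ * occurrences b' ξ ≤
      (Fintype.card τ / #A : ℝ) ^ 2 + if b = b' then (Fintype.card τ / #A : ℝ) else 0 := by
  have hpair : ∀ l l' : τ,
      𝔼 ξ ∈ words τ A, ((if ξ l = b then 1 else 0) * (if ξ l' = b' then 1 else 0) : ℝ) ≤
        (1 / #A) ^ 2 + if l = l' then (if b = b' then (1 / #A : ℝ) else 0) else 0 := fun l l' => by
    rcases eq_or_ne l l' with rfl | hl
    · rcases eq_or_ne b b' with rfl | hb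
      · simp only [← ite_and, and_self, mul_ite, mul_one, mul_zero, if_true, expect_words_eq hA]
        have : (if b ∈ A then 1 else 0 : ℝ) / #A ≤ 1 / #A := by
          gcongr
          split_ifs <;> norm_num
        linarith [sq_nonneg (1 / #A : ℝ)]
      · have : ∀ ξ : τ → G, ((if ξ l = b then 1 else 0) * (if ξ l = b' then 1 else 0) : ℝ) = 0 :=
          fun ξ => by split_ifs <;> simp_all
        simp only [this, expect_const_zero, if_neg hb, ite_self, add_zero]
        positivity
    · simpa [hl] using expect_words_eq_mul_eq_le hA hl b b'
  calc 𝔼 ξ ∈ words τ A, occurrences b ξ * occurrences b' ξ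
      = ∑ l, ∑ l', 𝔼 ξ ∈ words τ A,
          ((if ξ l = b then 1 else 0) * (if ξ l' = b' then 1 else 0) : ℝ) := by
        simp only [occurrences, sum_mul_sum, expect_sum_comm]
    _ ≤ ∑ l : τ, ∑ l' : τ,
          ((1 / #A : ℝ) ^ 2 + if l = l' then (if b = b' then (1 / #A : ℝ) else 0) else 0) :=
        sum_le_sum fun l _ => sum_le_sum fun l' _ => hpair l l'
    _ = _ := by
        simp only [sum_add_distrib, sum_ite_eq, mem_univ, if_true, sum_const, card_univ,
          nsmul_eq_mul]
        split_ifs <;> ring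

/-- The number of positions at which replacing a letter `b` of the word `ξ` by `b'` produces the
word `υ`. -/
noncomputable def replacements (b b' : G) (ξ υ : τ → G) : ℝ :=
  ∑ l, if ξ l = b ∧ υ = Function.update ξ l b' then 1 else 0

theorem replacements_nonneg (b b' : G) (ξ υ : τ → G) : 0 ≤ replacements b b' ξ υ :=
  sum_nonneg fun _ _ => by split_ifs <;> norm_num

theorem replacements_comm (b b' : G) (ξ υ : τ → G) :
    replacements b b' ξ υ = replacements b' b υ ξ := by
  have hswap : ∀ {b b' : G} {ξ υ : τ → G} {l}, (ξ l = b ∧ υ = Function.update ξ l b') →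
      (υ l = b' ∧ ξ = Function.update υ l b) := by
    rintro b b' ξ υ l ⟨rfl, rfl⟩
    simp
  exact sum_congr rfl fun l _ => if_congr ⟨hswap, hswap⟩ rfl rfl

theorem sum_replacements [Fintype G] (b b' : G) (ξ : τ → G) :
    ∑ υ, replacements b b' ξ υ = occurrences b ξ := by
  simp only [replacements, occurrences]
  rw [sum_comm]
  exact sum_congr rfl fun l _ => by by_cases h : ξ l = b <;> simp [h]

theorem expect_sum_replacements (hA : A.Nonempty) (b b' : G) :
    𝔼 ξ ∈ words τ A, ∑ υ ∈ words τ A, replacements b b' ξ υ =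
      if b ∈ A ∧ b' ∈ A then (Fintype.card τ / #A : ℝ) else 0 := by
  have hsum : ∀ ξ ∈ words τ A, ∑ υ ∈ words τ A, replacements b b' ξ υ =
      (if b' ∈ A then 1 else 0) * occurrences b ξ := fun ξ hξ => by
    simp only [replacements, occurrences, mul_sum]
    rw [sum_comm]
    refine sum_congr rfl fun l _ => ?_
    simp only [ite_and]
    by_cases h : ξ l = b <;> simp [h, update_mem_words hξ]
  rw [expect_congr rfl hsum, ← mul_expect, expect_occurrences hA, ite_and]
  split_ifs <;> simp

end Words

section Kikuchi

variable {κ τ α G : Type*} [Fintype κ] [Fintype τ] [DecidableEq τ] [Fintype α] [DecidableEq G]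

/-- The Kikuchi matrix of the family of hyperedges `{e j a, f j a | j : κ}`, `a : α`. It is indexed
by `κ`-tuples of words; the hyperedge `a` links `x` to `y` whenever, for each `j`, the word `y j`
arises from `x j` by replacing one letter `e j a` by `f j a`. -/
noncomputable def kikuchi (e f : κ → α → G) : Matrix (κ → τ → G) (κ → τ → G) ℝ :=
  Matrix.of fun x y => ∑ a, ∏ j, replacements (e j a) (f j a) (x j) (y j)

theorem kikuchi_nonneg (e f : κ → α → G) (x y : κ → τ → G) : 0 ≤ kikuchi e f x y :=
  sum_nonneg fun _ _ => prod_nonneg fun _ _ => replacements_nonneg ..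

theorem kikuchi_comm (e f : κ → α → G) (x y : κ → τ → G) : kikuchi e f x y = kikuchi f e y x :=
  sum_congr rfl fun _ _ => prod_congr rfl fun _ _ => replacements_comm ..

variable [DecidableEq κ] {A : Finset G}

theorem sum_kikuchi [Fintype G] (e f : κ → α → G) (x : κ → τ → G) :
    ∑ y, kikuchi e f x y = ∑ a, ∏ j, occurrences (e j a) (x j) := by
  simp only [kikuchi, of_apply]
  rw [sum_comm]
  refine sum_congr rfl fun a _ => ?_
  calc ∑ y : κ → τ → G, ∏ j, replacements (e j a) (f j a) (x j) (y j)
      = ∏ j, ∑ υ, replacements (e j a) (f j a) (x j) υ := by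
        rw [prod_univ_sum, Fintype.piFinset_univ]
    _ = ∏ j, occurrences (e j a) (x j) := prod_congr rfl fun j _ => sum_replacements ..

theorem expect_sum_kikuchi (hA : A.Nonempty) (e f : κ → α → G) :
    𝔼 x ∈ wordTuples κ τ A, ∑ y ∈ wordTuples κ τ A, kikuchi e f x y =
      #{a | ∀ j, e j a ∈ A ∧ f j a ∈ A} * (Fintype.card τ / #A : ℝ) ^ Fintype.card κ := by
  have hedge : ∀ a, 𝔼 x ∈ wordTuples κ τ A, ∑ y ∈ wordTuples κ τ A,
      ∏ j, replacements (e j a) (f j a) (x j) (y j) =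
        if ∀ j, e j a ∈ A ∧ f j a ∈ A then (Fintype.card τ / #A : ℝ) ^ Fintype.card κ else 0 := by
    intro a
    have hsum : ∀ x : κ → τ → G, ∑ y ∈ wordTuples κ τ A,
        ∏ j, replacements (e j a) (f j a) (x j) (y j) =
          ∏ j, ∑ υ ∈ words τ A, replacements (e j a) (f j a) (x j) υ := fun x =>
      (prod_univ_sum ..).symm
    simp only [hsum]
    rw [expect_wordTuples_prod hA fun j ξ => ∑ υ ∈ words τ A, replacements (e j a) (f j a) ξ υ]
    simp only [expect_sum_replacements hA, prod_ite_zero, prod_const, card_univ, mem_univ,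
      true_imp_iff]
  simp only [kikuchi, of_apply]
  simp only [sum_comm (s := wordTuples κ τ A), expect_sum_comm, hedge]
  rw [← sum_filter, sum_const, nsmul_eq_mul]

theorem expect_sq_sum_prod_occurrences_le (hA : A.Nonempty) {e : κ → α → G}
    (he : ∀ j, Function.Injective (e j)) {lam : ℝ} (hlam : lam = Fintype.card τ / #A) :
    𝔼 x ∈ wordTuples κ τ A, (∑ a, ∏ j, occurrences (e j a) (x j)) ^ 2 ≤
      Fintype.card α ^ 2 * (lam ^ 2) ^ Fintype.card κ
        + Fintype.card α * (lam ^ 2 + lam) ^ Fintype.card κ := by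
  classical
  have : 0 ≤ lam := by rw [hlam]; positivity
  have hpair : ∀ a a' : α, 𝔼 x ∈ wordTuples κ τ A,
      ∏ j, (occurrences (e j a) (x j) * occurrences (e j a') (x j)) ≤
        (lam ^ 2) ^ Fintype.card κ + if a = a' then (lam ^ 2 + lam) ^ Fintype.card κ else 0 := by
    intro a a'
    rw [expect_wordTuples_prod hA fun j ξ => occurrences (e j a) ξ * occurrences (e j a') ξ]
    have hocc : ∀ j, 𝔼 ξ ∈ words τ A, occurrences (e j a) ξ * occurrences (e j a') ξ ≤
        lam ^ 2 + if a = a' then lam else 0 := fun j => by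
      have := expect_occurrences_mul_le (τ := τ) hA (e j a) (e j a')
      simpa only [(he j).eq_iff, ← hlam] using this
    refine (prod_le_prod (fun j _ => expect_nonneg fun ξ _ => ?_) fun j _ => hocc j).trans ?_
    · exact mul_nonneg (occurrences_nonneg ..) (occurrences_nonneg ..)
    rw [prod_const, card_univ]
    split_ifs
    · exact le_add_of_nonneg_left (by positivity)
    · simp
  calc 𝔼 x ∈ wordTuples κ τ A, (∑ a, ∏ j, occurrences (e j a) (x j)) ^ 2
      = ∑ a, ∑ a', 𝔼 x ∈ wordTuples κ τ A,
          ∏ j, (occurrences (e j a) (x j) * occurrences (e j a') (x j)) := by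
        simp only [sq, sum_mul_sum, prod_mul_distrib, expect_sum_comm]
    _ ≤ ∑ a : α, ∑ a' : α, ((lam ^ 2) ^ Fintype.card κ
          + if a = a' then (lam ^ 2 + lam) ^ Fintype.card κ else 0) :=
        sum_le_sum fun a _ => sum_le_sum fun a' _ => hpair a a'
    _ = _ := by
        simp only [sum_add_distrib, sum_ite_eq, mem_univ, if_true, sum_const, card_univ,
          nsmul_eq_mul]
        ring

theorem sum_symmTruncate_kikuchi_eq_zero (hA : A.Nonempty) {e f : κ → α → G} (R : ℝ)
    [Fintype G] (h : ∀ a, ¬∀ j, e j a ∈ A ∧ f j a ∈ A) :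
    ∑ x ∈ wordTuples κ τ A, ∑ y ∈ wordTuples κ τ A, symmTruncate R (kikuchi e f) x y = 0 := by
  have hkikuchi := expect_sum_kikuchi (τ := τ) hA e f
  have hcard : (#(wordTuples κ τ A) : ℝ) ≠ 0 := by
    exact_mod_cast (wordTuples_nonempty hA).card_ne_zero
  rw [filter_false_of_mem fun a _ => h a, card_empty, Nat.cast_zero, zero_mul,
    expect_eq_sum_div_card, div_eq_zero_iff, or_iff_left hcard] at hkikuchi
  rw [sum_sum_symmTruncate, mul_eq_zero, or_iff_right two_ne_zero]
  refine le_antisymm ?_ <|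
    sum_nonneg fun x _ => sum_nonneg fun y _ => truncate_nonneg (kikuchi_nonneg e f) x y
  rw [← hkikuchi]
  exact sum_le_sum fun x _ => sum_le_sum fun y _ => truncate_le (kikuchi_nonneg e f) x y

theorem le_expect_sum_symmTruncate_kikuchi [Fintype G] (hA : A.Nonempty) {e f : κ → α → G}
    (he : ∀ j, Function.Injective (e j)) (hf : ∀ j, Function.Injective (f j)) {R B lam : ℝ}
    (hR : 0 < R) (hlam : lam = Fintype.card τ / #A)
    (hB : Fintype.card α ^ 2 * (lam ^ 2) ^ Fintype.card κ
      + Fintype.card α * (lam ^ 2 + lam) ^ Fintype.card κ ≤ B) :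
    2 * (#{a | ∀ j, e j a ∈ A ∧ f j a ∈ A} * lam ^ Fintype.card κ - 2 * B / R) ≤
      𝔼 x ∈ wordTuples κ τ A, ∑ y ∈ wordTuples κ τ A, symmTruncate R (kikuchi e f) x y := by
  have hsum := sum_sum_le_truncate_add (kikuchi_nonneg e f) hR (wordTuples κ τ A)
  have hcol : ∀ y : κ → τ → G, ∑ x, kikuchi e f x y = ∑ a, ∏ j, occurrences (f j a) (y j) :=
    fun y => by simp only [kikuchi_comm e f, sum_kikuchi]
  simp only [sum_kikuchi, hcol] at hsum
  have hexpect := div_le_div_of_nonneg_right hsum (Nat.cast_nonneg #(wordTuples κ τ A))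
  rw [add_div, add_div, div_right_comm _ R, div_right_comm _ R] at hexpect
  simp only [← expect_eq_sum_div_card, expect_sum_kikuchi hA e f, ← hlam] at hexpect
  have hrowB := div_le_div_of_nonneg_right
    ((expect_sq_sum_prod_occurrences_le hA he hlam).trans hB) hR.le
  have hcolB := div_le_div_of_nonneg_right
    ((expect_sq_sum_prod_occurrences_le hA hf hlam).trans hB) hR.le
  have htruncate : 𝔼 x ∈ wordTuples κ τ A, ∑ y ∈ wordTuples κ τ A,
      symmTruncate R (kikuchi e f) x y =
        2 * 𝔼 x ∈ wordTuples κ τ A, ∑ y ∈ wordTuples κ τ A, truncate R (kikuchi e f) x y := by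
    rw [expect_eq_sum_div_card, sum_sum_symmTruncate, expect_eq_sum_div_card, mul_div_assoc]
  rw [htruncate, mul_div_assoc]
  linarith

end Kikuchi

section Progressions

variable {G : Type*} [AddCommGroup G] {k : ℕ} {A : Finset G} {d : G}

/-- The terms of even index of the `2k`-term progression with first term `a` and difference `d`. -/
def evenTerm (k : ℕ) (d : G) (i : Fin k) (a : G) : G := a + (2 * i : ℕ) • d

/-- The terms of odd index of the `2k`-term progression with first term `a` and difference `d`. -/
def oddTerm (k : ℕ) (d : G) (i : Fin k) (a : G) : G := a + (2 * i + 1 : ℕ) • d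

theorem forall_evenTerm_oddTerm_mem_iff {a : G} :
    (∀ i, evenTerm k d i a ∈ A ∧ oddTerm k d i a ∈ A) ↔ ∀ l < 2 * k, a + l • d ∈ A := by
  refine ⟨fun h l hl => ?_, fun h i => ⟨h _ (by omega), h _ (by omega)⟩⟩
  obtain ⟨i, rfl | rfl⟩ := l.even_or_odd'
  · exact (h ⟨i, by omega⟩).1
  · exact (h ⟨i, by omega⟩).2

variable [Fintype G] [DecidableEq G] {τ : Type*} [Fintype τ] [DecidableEq τ] {R : ℝ}

/-- The Kikuchi matrix of the `2k`-term progressions with difference `d`, truncated and made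
symmetric. Trivial progressions are discarded by letting the matrix vanish for `d = 0`. -/
noncomputable def differenceMatrix (k : ℕ) (τ : Type*) [Fintype τ] [DecidableEq τ] (R : ℝ) (d : G) :
    Matrix (Fin k → τ → G) (Fin k → τ → G) ℝ :=
  if d = 0 then 0 else symmTruncate R (kikuchi (evenTerm k d) (oddTerm k d))

theorem differenceMatrix_isSymm (d : G) : (differenceMatrix k τ R d).IsSymm := by
  rw [differenceMatrix]
  split_ifs
  exacts [transpose_zero, symmTruncate_isSymm]

theorem sum_abs_differenceMatrix_le (hR : 0 ≤ R) (d : G) (x : Fin k → τ → G) :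
    ∑ y, |differenceMatrix k τ R d x y| ≤ 2 * R := by
  rw [differenceMatrix]
  split_ifs
  · simpa using hR
  · exact sum_abs_symmTruncate_le (kikuchi_nonneg _ _) hR x

theorem sum_differenceMatrix_eq_zero (hA : A.Nonempty)
    (h : d ≠ 0 → ∀ a, ¬∀ l < 2 * k, a + l • d ∈ A) :
    ∑ x ∈ wordTuples (Fin k) τ A, ∑ y ∈ wordTuples (Fin k) τ A, differenceMatrix k τ R d x y =
      0 := by
  rw [differenceMatrix]
  split_ifs with hd
  · simp
  · refine sum_symmTruncate_kikuchi_eq_zero hA R fun a => ?_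
    rw [forall_evenTerm_oddTerm_mem_iff]
    exact h hd a

theorem le_expect_sum_differenceMatrix (hA : A.Nonempty) {B lam : ℝ}
    (hR : 0 < R) (hlam : lam = Fintype.card τ / #A)
    (hB : Fintype.card G ^ 2 * (lam ^ 2) ^ k + Fintype.card G * (lam ^ 2 + lam) ^ k ≤ B) (d : G) :
    2 * (#{a | ∀ l < 2 * k, a + l • d ∈ A} * lam ^ k - 2 * B / R
        - if d = 0 then Fintype.card G * lam ^ k else 0) ≤
      𝔼 x ∈ wordTuples (Fin k) τ A, ∑ y ∈ wordTuples (Fin k) τ A, differenceMatrix k τ R d x y := by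
  have hlam0 : 0 ≤ lam := by rw [hlam]; positivity
  rw [differenceMatrix]
  split_ifs with hd
  · have hB0 : 0 ≤ 2 * B / R := by
      have : 0 ≤ B := le_trans (by positivity) hB
      positivity
    have hcount : (#{a | ∀ l < 2 * k, a + l • d ∈ A} : ℝ) ≤ Fintype.card G := by
      exact_mod_cast card_le_univ _
    have := mul_le_mul_of_nonneg_right hcount (pow_nonneg hlam0 k)
    simp only [Matrix.zero_apply, sum_const_zero, expect_const_zero]
    linarith
  · have := le_expect_sum_symmTruncate_kikuchi (κ := Fin k) hA
      (e := evenTerm k d) (f := oddTerm k d)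
      (fun _ => add_left_injective _) (fun _ => add_left_injective _) hR hlam
      (by simpa only [Fintype.card_fin] using hB)
    simpa only [forall_evenTerm_oddTerm_mem_iff, Fintype.card_fin, sub_zero] using this

theorem expect_card_progressions (q : ℕ) (A : Finset G) :
    𝔼 d : G, (#{a | ∀ l < q, a + l • d ∈ A} : ℝ) =
      Fintype.card G * density {p : G × G | ∀ l < q, p.1 + l • p.2 ∈ A} := by
  have hcount : ∀ d : G, (#{a | ∀ l < q, a + l • d ∈ A} : ℝ) = Fintype.card G *
      𝔼 a, Set.indicator {p : G × G | ∀ l < q, p.1 + l • p.2 ∈ A} 1 (a, d) := fun d => by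
    rw [Fintype.card_mul_expect, card_filter]
    push_cast
    exact sum_congr rfl fun a _ => by simp [Set.indicator_apply]
  simp only [hcount, ← mul_expect, density]
  rw [← univ_product_univ, expect_product, expect_comm]

-- The loss `lam ^ k` comes from the trivial progressions.
theorem half_le_expect_differenceMatrix (hA : A.Nonempty) {B c lam : ℝ} (hR : 0 < R)
    (hlam : lam = Fintype.card τ / #A)
    (hB : Fintype.card G ^ 2 * (lam ^ 2) ^ k + Fintype.card G * (lam ^ 2 + lam) ^ k ≤ B)
    (hBR : 2 * B / R ≤ c / 4) (hc : 2 ≤ c * Fintype.card G)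
    (hlamk : 1 ≤ Fintype.card G * lam ^ k)
    (hprog : c ≤ density {p : G × G | ∀ l < 2 * k, p.1 + l • p.2 ∈ A}) :
    c / 2 ≤ 𝔼 d : G, 𝔼 x ∈ wordTuples (Fin k) τ A, ∑ y ∈ wordTuples (Fin k) τ A,
      differenceMatrix k τ R d x y := by
  have hlam0 : 0 ≤ lam ^ k := by rw [hlam]; positivity
  have hcard : (0 : ℝ) < Fintype.card G := by exact_mod_cast Fintype.card_pos
  have htrivial : 𝔼 d : G, (if d = 0 then Fintype.card G * lam ^ k else 0) = lam ^ k := by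
    rw [Fintype.expect_eq_sum_div_card, sum_ite_eq', if_pos (mem_univ _),
      mul_div_cancel_left₀ _ hcard.ne']
  have hcount := mul_le_mul_of_nonneg_right hprog (mul_nonneg hcard.le hlam0)
  have hloss := mul_le_mul_of_nonneg_right hc hlam0
  have hmain := mul_le_mul_of_nonneg_left hlamk (by nlinarith : 0 ≤ c)
  refine le_trans ?_ (expect_le_expect fun d _ => le_expect_sum_differenceMatrix hA hR hlam hB d)
  rw [← mul_expect, expect_sub_distrib, expect_sub_distrib, htrivial, ← expect_mul,
    expect_card_progressions, Fintype.expect_const]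
  nlinarith

theorem indicator_wordTuples_mem_nullSamples {ι : Type*} (hA : A.Nonempty) {c : ℝ} {u : ι → G}
    (hu : ∀ i, u i ≠ 0 → ∀ a, ¬∀ l < 2 * k, a + l • u i ∈ A)
    (hc : c ≤ 𝔼 d : G, 𝔼 x ∈ wordTuples (Fin k) τ A, ∑ y ∈ wordTuples (Fin k) τ A,
      differenceMatrix k τ R d x y) :
    u ∈ nullSamples ι (differenceMatrix k τ R) c := by
  have hcard : (0 : ℝ) < #(wordTuples (Fin k) τ A) := by
    exact_mod_cast (wordTuples_nonempty hA).card_pos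
  refine ⟨(wordTuples (Fin k) τ A : Set _).indicator 1, ?_, fun i => ?_, ?_⟩
  · rwa [indicator_one_dotProduct_self]
  · rw [indicator_one_dotProduct_mulVec, sum_differenceMatrix_eq_zero hA (hu i)]
  · simp only [indicator_one_dotProduct_self, indicator_one_dotProduct_mulVec]
    rw [← le_div_iff₀ hcard, expect_div]
    simpa only [expect_eq_sum_div_card (wordTuples (Fin k) τ A)] using hc

end Progressions

section IndependentSamples

/-- The set `D` of differences is `q`-intersective at density `α`: every set of density at least `α`
contains a `q`-term progression whose difference is a nonzero element of `D`. -/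
def IsIntersective {G : Type*} [AddCommGroup G] [Fintype G] (q : ℕ) (α : ℝ) (D : Set G) : Prop :=
  ∀ A : Finset G, α * Fintype.card G ≤ #A → ∃ a, ∃ d ∈ D, d ≠ 0 ∧ ∀ l < q, a + l • d ∈ A

variable {α n s t : ℝ} {k : ℕ}

theorem one_le_mul_div_pow (hs : 0 < s) (hsn : s ≤ n) (ht : n ^ k ≤ n * t ^ k) :
    1 ≤ n * (t / s) ^ k := by
  rw [div_pow, mul_div_assoc', one_le_div (by positivity)]
  exact (pow_le_pow_left₀ hs.le hsn k).trans ht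

theorem mul_div_pow_le (hα : 0 < α) (hn : 0 < n) (hs : α * n ≤ s)
    (ht : n * t ^ k ≤ (2 * n) ^ k) : n * (t / s) ^ k ≤ (2 / α) ^ k := by
  have hs0 : 0 < s := lt_of_lt_of_le (by positivity) hs
  rw [div_pow, mul_div_assoc', div_le_iff₀ (by positivity), ← mul_pow]
  refine ht.trans (pow_le_pow_left₀ (by positivity) ?_ k)
  rw [div_mul_eq_mul_div, le_div_iff₀ hα]
  linarith

theorem occurrence_moment_le {lam b : ℝ} (hk : k ≠ 0) (hlam : 0 ≤ lam) (hb : 0 ≤ b) (hn : 1 ≤ n)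
    (h : n * lam ^ k ≤ b ^ k) :
    n ^ 2 * (lam ^ 2) ^ k + n * (lam ^ 2 + lam) ^ k ≤ (b ^ k) ^ 2 + b ^ k * (b + 1) ^ k := by
  have hlamb : lam ≤ b := (pow_le_pow_iff_left₀ hlam hb hk).1 <|
    (le_mul_of_one_le_left (pow_nonneg hlam k) hn).trans h
  calc n ^ 2 * (lam ^ 2) ^ k + n * (lam ^ 2 + lam) ^ k
      = (n * lam ^ k) ^ 2 + n * lam ^ k * (lam + 1) ^ k := by
        rw [mul_assoc n, ← mul_pow]
        ring
    _ ≤ _ := by gcongr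

theorem density_coe_finset {Ω : Type*} [Fintype Ω] (A : Finset Ω) :
    density (A : Set Ω) = #A / Fintype.card Ω := by
  classical
  rw [density, Fintype.expect_eq_sum_div_card]
  simp [Set.indicator_apply]

theorem mem_nullSamples_of_not_isIntersective {ι G : Type*} [AddCommGroup G] [Fintype G]
    [DecidableEq G] {R c : ℝ} {t : ℕ} {u : ι → G} (hα : 0 < α) (hk : k ≠ 0) (hR : 0 < R)
    (hBR : 2 * (((2 / α) ^ k) ^ 2 + (2 / α) ^ k * (2 / α + 1) ^ k) / R ≤ c / 4)
    (hc : 2 ≤ c * Fintype.card G)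
    (ht : (Fintype.card G : ℝ) ^ k ≤ Fintype.card G * (t : ℝ) ^ k)
    (ht' : Fintype.card G * (t : ℝ) ^ k ≤ (2 * Fintype.card G : ℝ) ^ k)
    (hprog : ∀ A : Set G, α ≤ density A →
      c ≤ density {p : G × G | ∀ l < 2 * k, p.1 + l • p.2 ∈ A})
    (hu : ¬IsIntersective (2 * k) α (Set.range u)) :
    u ∈ nullSamples ι (differenceMatrix k (Fin t) R) (c / 2) := by
  simp only [IsIntersective, not_forall, Set.exists_range_iff] at hu
  obtain ⟨A, hA, hu⟩ := hu
  have hn : (1 : ℝ) ≤ Fintype.card G := by exact_mod_cast Fintype.card_pos (α := G)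
  have hA0 : (0 : ℝ) < #A := lt_of_lt_of_le (by positivity) hA
  have hAne : A.Nonempty := card_pos.1 (by exact_mod_cast hA0)
  have hmoment := occurrence_moment_le hk (by positivity) (by positivity) hn
    (mul_div_pow_le hα (by positivity) hA ht')
  have hdensity : α ≤ density (A : Set G) := by
    rwa [density_coe_finset, le_div_iff₀ (by positivity)]
  exact indicator_wordTuples_mem_nullSamples hAne (fun i hi a ha => hu ⟨a, i, hi, ha⟩) <|
    half_le_expect_differenceMatrix hAne hR (by simp) hmoment hBR hc
      (one_le_mul_div_pow hA0 (by exact_mod_cast card_le_univ A) ht) (hprog A hdensity)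

theorem exists_density_not_isIntersective_le (hα : 0 < α) (hk : 0 < k) :
    ∃ K > (0 : ℝ), ∃ N₀ : ℕ, ∀ (G : Type) [AddCommGroup G] [Fintype G], N₀ ≤ Fintype.card G →
      ∀ t : ℕ, (Fintype.card G : ℝ) ^ k ≤ Fintype.card G * (t : ℝ) ^ k →
        Fintype.card G * (t : ℝ) ^ k ≤ (2 * Fintype.card G : ℝ) ^ k →
      ∀ m j : ℕ, 0 < m →
        density {u : Fin m → G | ¬IsIntersective (2 * k) α (Set.range u)} ≤
          2 * ((Fintype.card G : ℝ) ^ t) ^ k * (K * 2 ^ j / m) ^ 2 ^ j := by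
  have : NeZero (2 * k) := ⟨by omega⟩
  obtain ⟨c, hc, hprog⟩ := exists_le_density_progressions (2 * k) hα
  obtain ⟨N₀, hN₀⟩ := exists_nat_ge (2 / c)
  set B : ℝ := ((2 / α) ^ k) ^ 2 + (2 / α) ^ k * (2 / α + 1) ^ k
  have hB : 0 < B := by positivity
  set R : ℝ := 8 * B / c with hR
  have hR0 : 0 < R := by positivity
  have hBR : 2 * B / R = c / 4 := by
    rw [hR]
    field_simp
    norm_num
  refine ⟨(2 * (2 * R)) ^ 2 * (2 * Real.exp 1) / (c / 2) ^ 2, by positivity, N₀, ?_⟩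
  intro G _ _ hG t ht ht' m j hm
  classical
  have : NeZero m := ⟨hm.ne'⟩
  have hcn : 2 ≤ c * Fintype.card G := by
    rw [← div_le_iff₀' hc]
    exact hN₀.trans (by exact_mod_cast hG)
  have hnull : {u : Fin m → G | ¬IsIntersective (2 * k) α (Set.range u)} ⊆
      nullSamples (Fin m) (differenceMatrix k (Fin t) R) (c / 2) := fun _ =>
    mem_nullSamples_of_not_isIntersective hα hk.ne' hR0 hBR.le hcn ht ht' (hprog G)
  refine (density_mono hnull).trans <| (density_nullSamples_le differenceMatrix_isSymm
    (by positivity) (sum_abs_differenceMatrix_le hR0.le) (by positivity) j).trans_eq ?_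
  simp only [Fintype.card_fun, Fintype.card_fin, Nat.cast_pow]
  congr 2
  field_simp

end IndependentSamples

section UniformSubsets

variable {G : Type*} {𝒟 : Set (Finset G)} {D E : Finset G}

theorem exists_perm_map_eq [Finite G] (h : #D = #E) :
    ∃ σ : Equiv.Perm G, D.map σ.toEmbedding = E := by
  classical
  let e : {x // x ∈ D} ≃ {x // x ∈ E} := Finset.equivOfCardEq h
  refine ⟨e.extendSubtype, eq_of_subset_of_card_le (fun x hx => ?_) (by rw [card_map, h])⟩
  obtain ⟨y, hy, rfl⟩ := mem_map.1 hx
  exact e.extendSubtype_mem y hy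

variable [Fintype G] [DecidableEq G]

/-- The probability that a uniformly random permutation of `G` moves `D` into the family `𝒟`. -/
noncomputable def permDensity (𝒟 : Set (Finset G)) (D : Finset G) : ℝ :=
  density {π : Equiv.Perm G | D.map π.toEmbedding ∈ 𝒟}

theorem permDensity_congr (h : #D = #E) : permDensity 𝒟 D = permDensity 𝒟 E := by
  obtain ⟨σ, rfl⟩ := exists_perm_map_eq h
  refine Fintype.expect_equiv (Equiv.mulRight σ⁻¹) _ _ fun π => ?_
  have hmap : (D.map σ.toEmbedding).map (π * σ⁻¹).toEmbedding = D.map π.toEmbedding := by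
    rw [Finset.map_map]
    congr 1
    ext x
    simp
  classical
  simp only [Set.indicator_apply, Set.mem_ofPred_eq, Equiv.coe_mulRight, hmap, Pi.one_apply]

theorem permDensity_antitone (h𝒟 : IsLowerSet 𝒟) : Antitone (permDensity 𝒟) :=
  fun _ _ h => density_mono fun _ hπ => h𝒟 (map_subset_map.2 h) hπ

theorem sum_powersetCard_permDensity (m : ℕ) [DecidablePred (· ∈ 𝒟)] :
    ∑ D ∈ powersetCard m univ, permDensity 𝒟 D = #{D ∈ powersetCard m univ | D ∈ 𝒟} := by
  have hperm : ∀ π : Equiv.Perm G, ∑ D ∈ powersetCard m univ,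
      Set.indicator {π : Equiv.Perm G | D.map π.toEmbedding ∈ 𝒟} (1 : Equiv.Perm G → ℝ) π =
        #{D ∈ powersetCard m univ | D ∈ 𝒟} := fun π => by
    rw [card_filter]
    push_cast
    refine sum_equiv π.finsetCongr (by simp [mem_powersetCard]) fun D _ => ?_
    by_cases hD : D.map π.toEmbedding ∈ 𝒟 <;> simp [hD]
  simp only [permDensity, density]
  rw [← expect_sum_comm]
  simp only [hperm, Fintype.expect_const]

theorem expect_permDensity_image {ι : Type*} [Fintype ι] [DecidableEq ι] :
    𝔼 u : ι → G, permDensity 𝒟 (univ.image u) = density {u : ι → G | univ.image u ∈ 𝒟} := by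
  simp only [permDensity, density]
  rw [expect_comm]
  refine (expect_congr rfl fun π _ => ?_).trans (Fintype.expect_const _)
  refine Fintype.expect_equiv ((Equiv.refl ι).arrowCongr π) _ _ fun u => ?_
  have himage : (univ.image u).map π.toEmbedding =
      univ.image ((Equiv.refl ι).arrowCongr π u) := by
    rw [map_eq_image, image_image]
    rfl
  classical
  simp only [Set.indicator_apply, Set.mem_ofPred_eq, himage, Pi.one_apply]

theorem card_filter_powersetCard_le (h𝒟 : IsLowerSet 𝒟) [DecidablePred (· ∈ 𝒟)] {m : ℕ}
    (hm : m ≤ Fintype.card G) [Nonempty G] :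
    (#{D ∈ powersetCard m univ | D ∈ 𝒟} : ℝ) ≤
      density {u : Fin m → G | univ.image u ∈ 𝒟} * #(powersetCard m (univ : Finset G)) := by
  have hle : ∀ D ∈ powersetCard m univ,
      permDensity 𝒟 D ≤ density {u : Fin m → G | univ.image u ∈ 𝒟} := fun D hD => by
    rw [← expect_permDensity_image]
    refine le_expect univ_nonempty fun u _ => ?_
    obtain ⟨E, huE, _, hE⟩ := exists_subsuperset_card_eq (subset_univ (univ.image u))
      (card_image_le.trans (by simp)) hm
    rw [permDensity_congr ((mem_powersetCard.1 hD).2.trans hE.symm)]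
    exact permDensity_antitone h𝒟 huE
  rw [← sum_powersetCard_permDensity, mul_comm, ← nsmul_eq_mul]
  exact sum_le_card_nsmul _ _ _ hle

end UniformSubsets

section Threshold

variable {β K C : ℝ} {k t m n q : ℕ}

theorem one_le_log_natCast (hn : 3 ≤ n) : 1 ≤ Real.log n := by
  have hn' : (3 : ℝ) ≤ n := by exact_mod_cast hn
  rw [Real.le_log_iff_exp_le (by positivity)]
  exact Real.exp_one_lt_three.le.trans hn'

-- Taking `2 ^ j` just above `L` makes the base at most `1 / e`.
theorem exists_pow_two_pow_le {L : ℝ} (hK : 0 < K) (hL : 1 ≤ L)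
    (hm : 2 * Real.exp 1 * K * L ≤ m) :
    ∃ j : ℕ, (K * 2 ^ j / m) ^ 2 ^ j ≤ Real.exp (-L) := by
  obtain ⟨i, hi, hi'⟩ := exists_nat_pow_near hL one_lt_two
  have hm0 : (0 : ℝ) < m := lt_of_lt_of_le (by positivity) hm
  have hbase : K * 2 ^ (i + 1) / m ≤ Real.exp (-1) := by
    rw [div_le_iff₀ hm0, Real.exp_neg, inv_mul_eq_div, le_div_iff₀ (Real.exp_pos 1)]
    calc K * 2 ^ (i + 1) * Real.exp 1 = 2 * Real.exp 1 * K * 2 ^ i := by ring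
      _ ≤ 2 * Real.exp 1 * K * L := by gcongr
      _ ≤ m := hm
  refine ⟨i + 1, (pow_le_pow_left₀ (by positivity) hbase _).trans ?_⟩
  rw [← Real.exp_nat_mul, Real.exp_le_exp]
  push_cast
  linarith

theorem exists_mul_pow_two_pow_le {N : ℝ} (hβ : 0 < β) (hβ₁ : β < 1) (hK : 0 < K) (hN : 1 ≤ N)
    (hkt : 1 ≤ k * t * Real.log N)
    (hm : 2 * Real.exp 1 * K * (k * t * Real.log N + Real.log (2 / β)) ≤ m) :
    ∃ j : ℕ, 2 * (N ^ t) ^ k * (K * 2 ^ j / m) ^ 2 ^ j ≤ β := by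
  have hlog : 0 ≤ Real.log (2 / β) := Real.log_nonneg <| (one_le_div hβ).2 (by linarith)
  obtain ⟨j, hj⟩ := exists_pow_two_pow_le hK (by linarith) hm
  have hNpow : Real.exp (k * t * Real.log N) = (N ^ t) ^ k := by
    rw [← Nat.cast_mul, Real.exp_nat_mul, Real.exp_log (by linarith), ← pow_mul, mul_comm]
  refine ⟨j, (mul_le_mul_of_nonneg_left hj (by positivity)).trans_eq ?_⟩
  rw [Real.exp_neg, Real.exp_add, Real.exp_log (by positivity), hNpow]
  field_simp

theorem exists_wordLength (hn : 0 < n) (hk : 0 < k) :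
    ∃ t : ℕ, 0 < t ∧ (n : ℝ) ^ k ≤ n * (t : ℝ) ^ k ∧ (n : ℝ) * (t : ℝ) ^ k ≤ (2 * n) ^ k ∧
      (t : ℝ) ≤ 2 * (n : ℝ) ^ (1 - (k : ℝ)⁻¹) := by
  have hn₁ : (1 : ℝ) ≤ n := by exact_mod_cast hn
  have hk₁ : (1 : ℝ) ≤ k := by exact_mod_cast hk
  set x : ℝ := (n : ℝ) ^ (1 - (k : ℝ)⁻¹) with hx
  have hx₁ : 1 ≤ x := Real.one_le_rpow hn₁ (sub_nonneg.2 (inv_le_one_of_one_le₀ hk₁))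
  have hxk : n * x ^ k = (n : ℝ) ^ k := by
    have hexp : (1 - (k : ℝ)⁻¹) * k = k - 1 := by field_simp
    rw [hx, ← Real.rpow_mul_natCast (by positivity), hexp, Real.rpow_sub_one (by positivity),
      Real.rpow_natCast]
    field_simp
  have hceil : (⌈x⌉₊ : ℝ) ≤ 2 * x := by
    linarith [Nat.ceil_lt_add_one (zero_le_one.trans hx₁)]
  refine ⟨⌈x⌉₊, Nat.ceil_pos.2 (by linarith), ?_, ?_, hceil⟩
  · rw [← hxk]
    gcongr
    exact Nat.le_ceil x
  · calc (n : ℝ) * (⌈x⌉₊ : ℝ) ^ k ≤ n * (2 * x) ^ k := by gcongr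
      _ = (2 * n) ^ k := by rw [mul_pow, mul_left_comm, hxk, mul_pow]

theorem exists_density_not_isIntersective_le_of_threshold {α : ℝ} (hα : 0 < α) (hk : 0 < k)
    (hβ : 0 < β) (hβ₁ : β < 1) :
    ∃ C ≥ (1 : ℝ), ∃ N₀ ≥ 3, ∀ (G : Type) [AddCommGroup G] [Fintype G], N₀ ≤ Fintype.card G →
      ∀ m : ℕ, C * (Fintype.card G : ℝ) ^ (1 - (k : ℝ)⁻¹) * Real.log (Fintype.card G) ≤ m →
        density {u : Fin m → G | ¬IsIntersective (2 * k) α (Set.range u)} ≤ β := by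
  obtain ⟨K, hK, N₀, hdensity⟩ := exists_density_not_isIntersective_le hα hk
  set C : ℝ := max 1 (4 * Real.exp 1 * K * (k + Real.log (2 / β)))
  refine ⟨C, le_max_left _ _, max 3 N₀, le_max_left _ _, fun G _ _ hG m hm => ?_⟩
  set n := Fintype.card G
  have hn : 3 ≤ n := (le_max_left _ _).trans hG
  have hlogn : 1 ≤ Real.log n := one_le_log_natCast hn
  have hlogβ : 0 ≤ Real.log (2 / β) := Real.log_nonneg <| (one_le_div hβ).2 (by linarith)
  obtain ⟨t, ht, hle, hge, htn⟩ := exists_wordLength (n := n) (by omega) hk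
  have hk₁ : (1 : ℝ) ≤ k := by exact_mod_cast hk
  have ht₁ : (1 : ℝ) ≤ t := by exact_mod_cast ht
  have htlog : 1 ≤ t * Real.log n := one_le_mul_of_one_le_of_one_le ht₁ hlogn
  have hm0 : 0 < m := by
    have : (0 : ℝ) < m := lt_of_lt_of_le (by positivity) hm
    exact_mod_cast this
  have hmL : 2 * Real.exp 1 * K * (k * t * Real.log n + Real.log (2 / β)) ≤ m := by
    calc 2 * Real.exp 1 * K * (k * t * Real.log n + Real.log (2 / β))
        ≤ 2 * Real.exp 1 * K * ((k + Real.log (2 / β)) * (t * Real.log n)) := by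
          gcongr
          nlinarith
      _ ≤ 2 * Real.exp 1 * K *
          ((k + Real.log (2 / β)) * (2 * (n : ℝ) ^ (1 - (k : ℝ)⁻¹) * Real.log n)) := by gcongr
      _ = 4 * Real.exp 1 * K * (k + Real.log (2 / β)) * (n : ℝ) ^ (1 - (k : ℝ)⁻¹) *
          Real.log n := by ring
      _ ≤ C * (n : ℝ) ^ (1 - (k : ℝ)⁻¹) * Real.log n := by
          gcongr
          exact le_max_right _ _
      _ ≤ m := hm
  obtain ⟨j, hj⟩ := exists_mul_pow_two_pow_le hβ hβ₁ hK (by exact_mod_cast (by omega : 1 ≤ n))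
    (by rw [mul_assoc]; exact one_le_mul_of_one_le_of_one_le hk₁ htlog) hmL
  exact (hdensity G ((le_max_right _ _).trans hG) t hle hge m j hm0).trans hj

end Threshold

section Main

variable {G : Type*} [AddCommGroup G] [Fintype G] {α β : ℝ} {q r m : ℕ}

theorem IsIntersective.anti {D : Set G} (hqr : q ≤ r) (h : IsIntersective r α D) :
    IsIntersective q α D := fun A hA => by
  obtain ⟨a, d, hd, hd0, had⟩ := h A hA
  exact ⟨a, d, hd, hd0, fun l hl => had l (hl.trans_le hqr)⟩

theorem IsIntersective.mono {D E : Set G} (hDE : D ⊆ E) (h : IsIntersective q α D) :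
    IsIntersective q α E := fun A hA => by
  obtain ⟨a, d, hd, had⟩ := h A hA
  exact ⟨a, d, hDE hd, had⟩

theorem le_ncard_isIntersective
    (h : density {u : Fin m → G | ¬IsIntersective q α (Set.range u)} ≤ β) :
    (1 - β) * {D : Finset G | #D = m}.ncard ≤
      ({D : Finset G | #D = m ∧ IsIntersective q α (D : Set G)}.ncard : ℝ) := by
  classical
  set 𝒟 : Set (Finset G) := {D | ¬IsIntersective q α (D : Set G)}
  have h𝒟 : IsLowerSet 𝒟 := fun D E hED hD hE => hD (hE.mono (coe_subset.2 hED))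
  have hall : {D : Finset G | #D = m} = (powersetCard m univ : Finset (Finset G)) := by
    ext D
    simp
  have hgood : {D : Finset G | #D = m ∧ IsIntersective q α (D : Set G)} =
      ({D ∈ powersetCard m univ | D ∉ 𝒟} : Finset (Finset G)) := by
    ext D
    simp [𝒟]
  rw [hall, hgood, Set.ncard_coe_finset, Set.ncard_coe_finset]
  have hsplit : (#{D ∈ powersetCard m (univ : Finset G) | D ∈ 𝒟} : ℝ) +
      #{D ∈ powersetCard m univ | D ∉ 𝒟} = #(powersetCard m (univ : Finset G)) := by
    exact_mod_cast card_filter_add_card_filter_not _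
  have hbad : (#{D ∈ powersetCard m univ | D ∈ 𝒟} : ℝ) ≤
      β * #(powersetCard m (univ : Finset G)) := by
    obtain hm | hm := le_or_gt m (Fintype.card G)
    · refine (card_filter_powersetCard_le h𝒟 hm).trans ?_
      gcongr
      simpa [𝒟] using h
    · simp [powersetCard_eq_empty.2 (by rwa [card_univ] : #(univ : Finset G) < m)]
  linarith

end Main

theorem mul_rpow_mul_log_le_sampleSize {C : ℝ} {n : ℕ} (q : ℕ) (hC : 1 ≤ C) (hn : 3 ≤ n) :
    C * (n : ℝ) ^ (1 - (((q + 1) / 2 : ℕ) : ℝ)⁻¹) * Real.log n ≤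
      (if q = 2 then ⌈C * Real.log n ^ 2⌉₊
        else ⌈C * (n : ℝ) ^ (1 - (((q + 1) / 2 : ℕ) : ℝ)⁻¹) * Real.log n ^ C⌉₊ : ℕ) := by
  have hlog := one_le_log_natCast hn
  split_ifs with hq
  · subst hq
    refine le_trans ?_ (Nat.le_ceil _)
    norm_num
    gcongr
    exact le_self_pow₀ hlog two_ne_zero
  · refine le_trans ?_ (Nat.le_ceil _)
    gcongr
    exact Real.self_le_rpow_of_one_le hlog hC

end RandomDifferences

open RandomDifferences in
theorem szemeredi_random_differences_general {α : ℝ} (hα : 0 < α) {q : ℕ} (hq : 0 < q)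
    {β : ℝ} (hβ : β ∈ Set.Ioo (0 : ℝ) 1) :
    ∃ C ≥ (1 : ℝ), ∃ N₀ ≥ 3, ∀ (G : Type) [AddCommGroup G] [Fintype G], N₀ ≤ Fintype.card G →
      ∀ m : ℕ, C * (Fintype.card G : ℝ) ^ (1 - (((q + 1) / 2 : ℕ) : ℝ)⁻¹) *
          Real.log (Fintype.card G) ≤ m →
        (1 - β) * {D : Finset G | #D = m}.ncard ≤
          ({D : Finset G | #D = m ∧ IsIntersective q α (D : Set G)}.ncard : ℝ) := by
  obtain ⟨C, hC, N₀, hN₀, hdensity⟩ :=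
    exists_density_not_isIntersective_le_of_threshold (k := (q + 1) / 2) hα (by omega) hβ.1 hβ.2
  refine ⟨C, hC, N₀, hN₀, fun G _ _ hG m hm => le_ncard_isIntersective ?_⟩
  have hanti : {u : Fin m → G | ¬IsIntersective q α (Set.range u)} ⊆
      {u | ¬IsIntersective (2 * ((q + 1) / 2)) α (Set.range u)} :=
    fun u hu h => hu (h.anti (by omega))
  exact (density_mono hanti).trans (hdensity G hG m hm)

/-- Random differences in Szemerédi's theorem: a uniformly random set `D ⊆ ℤ/Nℤ` of size
`m = ⌈C·N^{1−1/⌈q/2⌉}·(log N)^C⌉` (for `q ≥ 3`; `m = ⌈C·(log N)²⌉` for `q = 2`) is, with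
probability at least `1 − β`, such that every subset of density `α` contains a `q`-term
arithmetic progression with nonzero common difference in `D`. -/
theorem szemeredi_random_differences (α : ℝ) (hα : 0 < α) (q : ℕ) (hq : 2 ≤ q)
    (β : ℝ) (hβ : β ∈ Set.Ioo (0 : ℝ) 1) :
    ∃ C : ℝ, 0 < C ∧ ∃ N0 : ℕ, 0 < N0 ∧ ∀ N : ℕ, N0 ≤ N →
      (1 - β) * ({D : Finset (ZMod N) |
          D.card = (if q = 2 then ⌈C * Real.log N ^ 2⌉₊
            else ⌈C * (N : ℝ) ^ (1 - ((((q + 1) / 2 : ℕ) : ℝ))⁻¹) *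
              Real.log N ^ C⌉₊)} : Set (Finset (ZMod N))).ncard ≤
      ({D : Finset (ZMod N) |
          D.card = (if q = 2 then ⌈C * Real.log N ^ 2⌉₊
            else ⌈C * (N : ℝ) ^ (1 - ((((q + 1) / 2 : ℕ) : ℝ))⁻¹) *
              Real.log N ^ C⌉₊) ∧
          ∀ A : Finset (ZMod N), α * N ≤ A.card →
            ∃ a d : ZMod N, d ∈ D ∧ d ≠ 0 ∧
              ∀ j : ℕ, j < q → a + (j : ZMod N) * d ∈ A} : Set (Finset (ZMod N))).ncard := by
  obtain ⟨C, hC, N₀, hN₀, h⟩ := szemeredi_random_differences_general hα (by omega : 0 < q) hβ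
  refine ⟨C, by linarith, N₀, by omega, fun N hN => ?_⟩
  have : NeZero N := ⟨by omega⟩
  simpa only [RandomDifferences.IsIntersective, ZMod.card, nsmul_eq_mul, exists_and_left, mem_coe]
    using h (ZMod N) (by rwa [ZMod.card]) _ (by
      rw [ZMod.card]
      exact RandomDifferences.mul_rpow_mul_log_le_sampleSize q hC (by omega))
end

section
/- For every odd prime p there exists ε(p) ∈ (0,1] such that the following holds for all positive integers n. For every set A ⊆ F_p^n with |A| ≤ C(n+p−3, p−2) − 1 (binomial coefficient), there exists a set B ⊆ F_p^n with |B| ≥ ε(p)·p^n such that every nontrivial line containing a point of A meets B in at most p−2 points. (In fact one may take |B| ≥ p^n / p^{(2p−3)/(p−1)}.) -/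
/-!
Fix a degree `d` less than the order `q` of the field. If `A` has fewer points than there are
monomials of degree at most `d`, linear algebra gives a nonzero polynomial `P` of degree at
most `d` vanishing on `A`. By Schwartz–Zippel, `P` is nonzero on a proportion at least `1 - d / q`
of the space, so some nonzero value `c` is taken on a proportion at least
`(1 - d / q) / (q - 1)`; take `B = {P = c}`. On a line through a point of `A` the univariate
polynomial `P - c` is not zero, as it takes the value `-c`, so it has at most `d` roots.
For `d = q - 2` the density of `B` is at least `2 / (q (q - 1))`, which exceeds
`q ^ (-(2 q - 3) / (q - 1))` because `q ≤ 2 ^ (q - 1)`.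
-/

open Finset Module

section MonomialCount

lemma sum_range_succ_multichoose (n d : ℕ) :
    ∑ i ∈ range (d + 1), n.multichoose i = (n + 1).multichoose d := by
  induction d with
  | zero => simp
  | succ d ih => rw [sum_range_succ, ih, Nat.multichoose_succ_succ, add_comm]

variable (σ : Type*) [Fintype σ]

lemma card_finsupp_degree_le (d : ℕ) :
    Nat.card {s : σ →₀ ℕ // s.degree ≤ d} = (Fintype.card σ + d).choose d := by
  classical
  have degree_le_iff (s : σ →₀ ℕ) :
      s ∈ (range (d + 1)).biUnion (finsuppAntidiag univ) ↔ s.degree ≤ d := by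
    simp [mem_finsuppAntidiag, Finsupp.degree_eq_sum]
  have antidiag_disjoint :
      (range (d + 1) : Set ℕ).PairwiseDisjoint (finsuppAntidiag (univ : Finset σ)) := by
    refine fun i _ j _ hij => disjoint_left.2 fun s hi hj => hij ?_
    rw [← (mem_finsuppAntidiag.1 hi).1, (mem_finsuppAntidiag.1 hj).1]
  rw [Nat.subtype_card _ degree_le_iff, card_biUnion antidiag_disjoint]
  simp only [card_finsuppAntidiag_nat_eq_multichoose, card_univ]
  rw [sum_range_succ_multichoose, Nat.multichoose_eq, Nat.add_right_comm, Nat.add_sub_cancel]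

lemma finrank_restrictTotalDegree (R : Type*) [CommRing R] [Nontrivial R] (d : ℕ) :
    finrank R (MvPolynomial.restrictTotalDegree σ R d) = (Fintype.card σ + d).choose d := by
  rw [← card_finsupp_degree_le]
  exact finrank_eq_nat_card_basis (MvPolynomial.basisRestrictSupport R _)

end MonomialCount

section Vanishing

variable {σ K : Type*} [Field K]

lemma exists_mem_ne_zero_forall_eval_eq_zero (W : Submodule K (MvPolynomial σ K))
    {A : Finset (σ → K)} (hA : #A < finrank K W) :
    ∃ P ∈ W, P ≠ 0 ∧ ∀ a ∈ A, MvPolynomial.eval a P = 0 := by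
  have : FiniteDimensional K W := .of_finrank_pos (Nat.zero_lt_of_lt hA)
  let evalOn : W →ₗ[K] A → K :=
    LinearMap.pi fun a => (MvPolynomial.aeval (a : σ → K)).toLinearMap ∘ₗ W.subtype
  have ker_ne_bot : LinearMap.ker evalOn ≠ ⊥ :=
    LinearMap.ker_ne_bot_of_finrank_lt (by simpa using hA)
  obtain ⟨P, hP, hP0⟩ := (Submodule.ne_bot_iff _).mp ker_ne_bot
  refine ⟨P, P.2, by simpa using hP0, fun a ha => ?_⟩
  simpa [evalOn, MvPolynomial.aeval_eq_eval] using congrFun (LinearMap.mem_ker.mp hP) ⟨a, ha⟩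

lemma exists_totalDegree_le_forall_eval_eq_zero [Fintype σ] {d : ℕ} {A : Finset (σ → K)}
    (hA : #A < (Fintype.card σ + d).choose d) :
    ∃ P : MvPolynomial σ K, P ≠ 0 ∧ P.totalDegree ≤ d ∧ ∀ a ∈ A, MvPolynomial.eval a P = 0 := by
  rw [← finrank_restrictTotalDegree σ K] at hA
  obtain ⟨P, hPd, hP0, hPA⟩ := exists_mem_ne_zero_forall_eval_eq_zero _ hA
  exact ⟨P, hP0, (MvPolynomial.mem_restrictTotalDegree _ _ _).1 hPd, hPA⟩

end Vanishing

section Lines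

variable {σ R : Type*} [CommRing R]

/-- The restriction of the polynomial function `P` to the line `t ↦ a + t • y`, as a polynomial in
the parameter `t`. -/
noncomputable def restrictLine (P : MvPolynomial σ R) (a y : σ → R) : Polynomial R :=
  MvPolynomial.aeval (fun i => Polynomial.C (y i) * Polynomial.X + Polynomial.C (a i)) P

lemma natDegree_restrictLine_le (P : MvPolynomial σ R) (a y : σ → R) :
    (restrictLine P a y).natDegree ≤ P.totalDegree := by
  simpa using! MvPolynomial.aeval_natDegree_le P le_rfl _ fun i =>
    Polynomial.natDegree_linear_le (a := y i) (b := a i)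

lemma eval_restrictLine (P : MvPolynomial σ R) (a y : σ → R) (t : R) :
    (restrictLine P a y).eval t = MvPolynomial.eval (a + t • y) P := by
  rw [restrictLine, ← Polynomial.coe_aeval_eq_eval, ← AlgHom.comp_apply, MvPolynomial.comp_aeval,
    MvPolynomial.aeval_eq_eval]
  congr 2
  ext i
  simp [mul_comm t, add_comm (a i)]

lemma card_eval_line_eq_le [IsDomain R] [DecidableEq R] (P : MvPolynomial σ R) {a : σ → R} {c : R}
    (hac : MvPolynomial.eval a P ≠ c) (y : σ → R) (S : Finset R) :
    #{t ∈ S | MvPolynomial.eval (a + t • y) P = c} ≤ P.totalDegree := by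
  have sub_ne_zero : restrictLine P a y - Polynomial.C c ≠ 0 := fun h => hac <| by
    simpa [eval_restrictLine, sub_eq_zero] using congrArg (Polynomial.eval 0) h
  calc #{t ∈ S | MvPolynomial.eval (a + t • y) P = c}
      ≤ (restrictLine P a y - Polynomial.C c).natDegree := by
        refine Polynomial.card_le_degree_of_subset_roots fun t ht => ?_
        simp_all [eval_restrictLine, sub_eq_zero]
    _ ≤ P.totalDegree := by
        rw [Polynomial.natDegree_sub_C]
        exact natDegree_restrictLine_le P a y

end Lines

section LevelSets

variable {F : Type*} [Field F] [Fintype F] [DecidableEq F] {n : ℕ}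

local notation "q" => (Fintype.card F : ℝ)

lemma card_eval_eq_zero_le {P : MvPolynomial (Fin n) F} (hP : P ≠ 0) :
    (#{x | MvPolynomial.eval x P = 0} : ℝ) ≤ P.totalDegree / q * q ^ n := by
  have schwartz_zippel := MvPolynomial.schwartz_zippel_totalDegree hP univ
  rw [Fintype.piFinset_univ, card_univ, div_le_iff₀ (by positivity)] at schwartz_zippel
  simpa using (NNRat.cast_le (K := ℝ)).2 schwartz_zippel

lemma le_card_eval_ne_zero {P : MvPolynomial (Fin n) F} (hP : P ≠ 0) :
    (1 - P.totalDegree / q) * q ^ n ≤ #{x | MvPolynomial.eval x P ≠ 0} := by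
  have card_add : (#{x | MvPolynomial.eval x P = 0} : ℝ) + #{x | MvPolynomial.eval x P ≠ 0}
      = q ^ n := by
    exact_mod_cast (card_filter_add_card_filter_not _).trans (by simp)
  linarith [card_eval_eq_zero_le hP]

lemma exists_ne_zero_le_card_eval_eq {P : MvPolynomial (Fin n) F} (hP : P ≠ 0) :
    ∃ c ≠ 0, (1 - P.totalDegree / q) / (q - 1) * q ^ n ≤ #{x | MvPolynomial.eval x P = c} := by
  have card_sub_one_pos : 0 < q - 1 := sub_pos.2 (mod_cast Fintype.one_lt_card)
  have card_nonzero : (#(univ.erase (0 : F)) : ℝ) = q - 1 := by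
    rw [cast_card_erase_of_mem (mem_univ _), card_univ]
  obtain ⟨c, hc, hcard⟩ := exists_le_card_fiber_of_nsmul_le_card_of_maps_to
    (s := {x | MvPolynomial.eval x P ≠ 0}) (t := univ.erase 0) (f := (MvPolynomial.eval · P))
    (b := (1 - P.totalDegree / q) / (q - 1) * q ^ n) (by simp) ⟨1, by simp⟩ (by
      rw [nsmul_eq_mul, card_nonzero, ← mul_assoc, mul_div_cancel₀ _ card_sub_one_pos.ne']
      exact le_card_eval_ne_zero hP)
  refine ⟨c, ne_of_mem_erase hc, hcard.trans ?_⟩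
  gcongr
  simp

lemma exists_finset_card_line_inter_le {d : ℕ} {A : Finset (Fin n → F)}
    (hA : #A < (n + d).choose d) :
    ∃ B : Finset (Fin n → F), (1 - d / q) / (q - 1) * q ^ n ≤ #B ∧
      ∀ a ∈ A, ∀ y : Fin n → F, #{t : F | a + t • y ∈ B} ≤ d := by
  obtain ⟨P, hP0, hPd, hPA⟩ := exists_totalDegree_le_forall_eval_eq_zero
    (σ := Fin n) (A := A) (d := d) (by rwa [Fintype.card_fin])
  obtain ⟨c, hc, hcard⟩ := exists_ne_zero_le_card_eval_eq hP0
  refine ⟨univ.filter (MvPolynomial.eval · P = c), le_trans ?_ hcard, fun a ha y => ?_⟩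
  · have : 0 ≤ q - 1 := sub_nonneg.2 (mod_cast Fintype.card_pos)
    gcongr
  · have eval_ne : MvPolynomial.eval a P ≠ c := (hPA a ha).trans_ne hc.symm
    simpa using (card_eval_line_eq_le P eval_ne y univ).trans hPd

end LevelSets

section Exponent

lemma rpow_one_div_sub_one_le_two {x : ℝ} (hx : 2 ≤ x) : x ^ (1 / (x - 1)) ≤ 2 := by
  have bernoulli : x ≤ 2 ^ (x - 1) := by
    have := one_add_mul_self_le_rpow_one_add (s := 1) (p := x - 1) (by norm_num) (by linarith)
    norm_num at this
    exact this
  rw [one_div]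
  exact (Real.rpow_inv_le_iff_of_pos (by linarith) zero_le_two (by linarith)).2 bernoulli

lemma mul_sub_one_le_two_mul_rpow {x : ℝ} (hx : 2 ≤ x) :
    x * (x - 1) ≤ 2 * x ^ ((2 * x - 3) / (x - 1)) := by
  have exponent_eq : (2 * x - 3) / (x - 1) + 1 / (x - 1) = 2 := by
    have : x - 1 ≠ 0 := by linarith
    field_simp
    ring
  calc x * (x - 1) ≤ x ^ (2 : ℝ) := by rw [Real.rpow_two]; nlinarith
    _ = x ^ ((2 * x - 3) / (x - 1)) * x ^ (1 / (x - 1)) := by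
      rw [← Real.rpow_add (by linarith), exponent_eq]
    _ ≤ x ^ ((2 * x - 3) / (x - 1)) * 2 := by
      gcongr
      exact rpow_one_div_sub_one_le_two hx
    _ = 2 * x ^ ((2 * x - 3) / (x - 1)) := mul_comm _ _

lemma inv_rpow_le_two_div_mul_sub_one {x : ℝ} (hx : 2 ≤ x) :
    (x ^ ((2 * x - 3) / (x - 1)))⁻¹ ≤ 2 / (x * (x - 1)) := by
  have rpow_pos : 0 < x ^ ((2 * x - 3) / (x - 1)) := Real.rpow_pos_of_pos (by linarith) _
  rw [inv_le_iff_one_le_mul₀ rpow_pos, div_mul_eq_mul_div, one_le_div (by nlinarith)]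
  exact mul_sub_one_le_two_mul_rpow hx

end Exponent

theorem avoiding_set_exists_general (F : Type*) [Field F] [Fintype F] [DecidableEq F] :
    ∃ ε : ℝ, ε ∈ Set.Ioc (0 : ℝ) 1 ∧
    ∀ n : ℕ, ∀ A : Finset (Fin n → F),
      #A < (n + (Fintype.card F - 2)).choose (Fintype.card F - 2) →
      ∃ B : Finset (Fin n → F),
        ε * (Fintype.card F : ℝ) ^ n ≤ #B ∧
        (Fintype.card F : ℝ) ^ n /
          (Fintype.card F : ℝ) ^ ((2 * (Fintype.card F : ℝ) - 3) / ((Fintype.card F : ℝ) - 1)) ≤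
            #B ∧
        ∀ a ∈ A, ∀ y : Fin n → F, #{t : F | a + t • y ∈ B} ≤ Fintype.card F - 2 := by
  have two_le_card : 2 ≤ Fintype.card F := Fintype.one_lt_card
  have two_le_cast : (2 : ℝ) ≤ Fintype.card F := mod_cast two_le_card
  set q : ℝ := (Fintype.card F : ℝ) with hq
  set e := (2 * q - 3) / (q - 1)
  have q_pow_pos : 0 < q ^ e := Real.rpow_pos_of_pos (by linarith) _
  have one_le_q_pow : 1 ≤ q ^ e :=
    Real.one_le_rpow (by linarith) (div_nonneg (by linarith) (by linarith))
  have density_eq : (1 - (Fintype.card F - 2 : ℕ) / q) / (q - 1) = 2 / (q * (q - 1)) := by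
    rw [Nat.cast_sub two_le_card, ← hq, Nat.cast_two, one_sub_div (by linarith), sub_sub_cancel,
      div_div]
  refine ⟨(q ^ e)⁻¹, ⟨inv_pos.2 q_pow_pos, inv_le_one_of_one_le₀ one_le_q_pow⟩, fun n A hA => ?_⟩
  obtain ⟨B, hB, hlines⟩ := exists_finset_card_line_inter_le hA
  rw [density_eq] at hB
  have card_ge : (q ^ e)⁻¹ * q ^ n ≤ #B := by
    grw [← hB, inv_rpow_le_two_div_mul_sub_one two_le_cast]
  exact ⟨B, card_ge, by rwa [div_eq_inv_mul], hlines⟩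

/-- For every odd prime `p` there is `ε(p) ∈ (0,1]` such that for every set `A ⊆ F_p^n` of
size at most `C(n+p−3, p−2) − 1` there is a set `B` of size at least `ε(p)·p^n`
(indeed of size at least `p^n / p^{(2p−3)/(p−1)}`) such that every nontrivial line through a
point of `A` meets `B` in at most `p−2` points. -/
theorem avoiding_set_exists :
    ∀ p : ℕ, ∀ _ : Fact p.Prime, p ≠ 2 →
    ∃ ε : ℝ, ε ∈ Set.Ioc (0 : ℝ) 1 ∧
    ∀ n : ℕ, 0 < n → ∀ A : Finset (Fin n → ZMod p),
      A.card ≤ Nat.choose (n + p - 3) (p - 2) - 1 →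
      ∃ B : Finset (Fin n → ZMod p),
        ε * (p : ℝ) ^ n ≤ B.card ∧
        (p : ℝ) ^ n / (p : ℝ) ^ ((2 * (p : ℝ) - 3) / ((p : ℝ) - 1)) ≤ B.card ∧
        ∀ a ∈ A, ∀ y : Fin n → ZMod p, y ≠ 0 →
          (Finset.univ.filter fun lam : ZMod p => a + lam • y ∈ B).card ≤ p - 2 := by
  intro p hp _
  obtain ⟨ε, hε, avoid⟩ := avoiding_set_exists_general (ZMod p)
  rw [ZMod.card] at avoid
  refine ⟨ε, hε, fun n _ A hA => ?_⟩
  have choose_le : (n + p - 3).choose (p - 2) ≤ (n + (p - 2)).choose (p - 2) :=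
    Nat.choose_mono _ (by omega)
  have choose_pos : 0 < (n + (p - 2)).choose (p - 2) := Nat.choose_pos (by omega)
  obtain ⟨B, hB, hB', hlines⟩ := avoid n A (by omega)
  exact ⟨B, hB, hB', fun a ha y _ => hlines a ha y⟩
end
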